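/- The set of pairs (r, s) of real numbers with 0 < s < r < 1 such that there exists a compact packing of the Euclidean plane by disks of radii 1, r and s in which all three radii are actually used has at most 13617 elements. -/

import Mathlib

open Metric Set

noncomputable section

/-- The Euclidean plane. -/
abbrev Plane : Type := EuclideanSpace ℝ (Fin 2)

/-- A closed disk in the plane, given by its center and (positive) radius. -/
structure Disk where
  center : Plane
  radius : ℝ
  radius_pos : 0 < radius

/-- The set of points of a disk (a closed ball). -/
def Disk.set (d : Disk) : Set Plane := closedBall d.center d.radius

/-- A packing: a family of closed disks with pairwise disjoint interiors. -/
def IsPacking (P : Set Disk) : Prop :=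
  ∀ d ∈ P, ∀ d' ∈ P, d ≠ d' → Disjoint (interior d.set) (interior d'.set)

/-- Two disks are (externally) tangent: they intersect in exactly one point. -/
def Disk.Tangent (d d' : Disk) : Prop :=
  dist d.center d'.center = d.radius + d'.radius

/-- The union of the disks of a packing. -/
def packingUnion (P : Set Disk) : Set Plane := ⋃ d ∈ P, d.set

/-- A packing is compact (triangulated) if every connected component of the
complement of the union of the disks is bounded and its closure meets exactly
three of the disks, these three disks being pairwise tangent. -/
def IsCompactPacking (P : Set Disk) : Prop :=
  IsPacking P ∧
  ∀ x ∈ (packingUnion P)ᶜ,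
    Bornology.IsBounded (connectedComponentIn (packingUnion P)ᶜ x) ∧
    ∃ d₁ d₂ d₃ : Disk, d₁ ∈ P ∧ d₂ ∈ P ∧ d₃ ∈ P ∧
      d₁ ≠ d₂ ∧ d₁ ≠ d₃ ∧ d₂ ≠ d₃ ∧
      d₁.Tangent d₂ ∧ d₁.Tangent d₃ ∧ d₂.Tangent d₃ ∧
      {d ∈ P | (closure (connectedComponentIn (packingUnion P)ᶜ x) ∩ d.set).Nonempty}
        = {d₁, d₂, d₃}

/-- A packing uses the radius `r` if one of its disks has radius `r`. -/
def UsesRadius (P : Set Disk) (r : ℝ) : Prop := ∃ d ∈ P, d.radius = r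

/-- All radii of the disks of `P` belong to `S`. -/
def RadiiIn (P : Set Disk) (S : Set ℝ) : Prop := ∀ d ∈ P, d.radius ∈ S

/-- The square `[-r, r]²`. -/
def square (r : ℝ) : Set Plane := {x | |x 0| ≤ r ∧ |x 1| ≤ r}

/-- The density of a packing: the limsup, as `r → ∞`, of the proportion of the
square `[-r, r]²` covered by the disks. -/
def density (P : Set Disk) : ℝ :=
  Filter.limsup
    (fun r : ℝ => (MeasureTheory.volume (packingUnion P ∩ square r)).toReal / (4 * r ^ 2))
    Filter.atTop

end

/-!
The disks which touch a given disk of a compact packing surround it in a closed chain of mutually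
tangent disks, its corona, so the angles of the triangles spanned by its center and the centers of
two consecutive neighbours add up to `2 * π`. Such an angle is a function of the ratios of the three
radii which increases with the size of the neighbours relative to the central disk.

The sizes of consecutive neighbours, counted as unordered pairs, leave few possibilities for the
corona of a small disk, as it has at most five neighbours when one of them is larger. If one of them
is medium, the lower bounds for the angles show that the ratio of the medium radius to the small one
is bounded, which leaves finitely many coronas for medium disks. Since the tangency graph is
connected, the packing contains two coronas whose types are mixed enough for the monotonicity of the
angles to make the radii unique. The number of such pairs of types is bounded by enumeration.
-/

open Filter Topology

section LocallyConnected

variable {X : Type*} [TopologicalSpace X] [LocallyConnectedSpace X] {U S : Set X} {x : X}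

theorem closure_connectedComponentIn_inter_subset (hU : IsOpen U) :
    closure (connectedComponentIn U x) ∩ U ⊆ connectedComponentIn U x := by
  rintro z ⟨hzC, hzU⟩
  obtain ⟨t, htz, htx⟩ :=
    mem_closure_iff.1 hzC _ hU.connectedComponentIn (mem_connectedComponentIn hzU)
  rw [connectedComponentIn_eq htx, ← connectedComponentIn_eq htz]
  exact mem_connectedComponentIn hzU

theorem subset_connectedComponentIn_of_closure_inter_subset (hU : IsOpen U)
    (hS : IsPreconnected S) (hne : (S ∩ connectedComponentIn U x).Nonempty)
    (hcl : closure (connectedComponentIn U x) ∩ S ⊆ U) : S ⊆ connectedComponentIn U x :=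
  hS.subset_of_closure_inter_subset hU.connectedComponentIn hne fun _ hz =>
    closure_connectedComponentIn_inter_subset hU ⟨hz.1, hcl hz⟩

end LocallyConnected

namespace Disk

variable {d e : Disk}

theorem Tangent.symm (h : d.Tangent e) : e.Tangent d := by
  rw [Tangent, dist_comm, h, add_comm]

theorem Tangent.ne (h : d.Tangent e) : d ≠ e := by
  rintro rfl
  rw [Tangent, dist_self] at h
  linarith [d.radius_pos]

end Disk

section Packing

variable {P : Set Disk} {d e : Disk} {x y : Plane}

theorem mem_packingUnion : x ∈ packingUnion P ↔ ∃ d ∈ P, x ∈ d.set := by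
  simp only [packingUnion, mem_iUnion, exists_prop]

theorem IsPacking.add_radius_le_dist (hP : IsPacking P) (hd : d ∈ P) (he : e ∈ P) (hne : d ≠ e) :
    d.radius + e.radius ≤ dist d.center e.center := by
  have h := hP d hd e he hne
  rw [Disk.set, Disk.set, interior_closedBall _ d.radius_pos.ne',
    interior_closedBall _ e.radius_pos.ne'] at h
  exact (disjoint_ball_ball_iff d.radius_pos e.radius_pos).1 h

theorem IsPacking.tangent_of_mem (hP : IsPacking P) (hd : d ∈ P) (he : e ∈ P) (hne : d ≠ e)
    (hxd : x ∈ d.set) (hxe : x ∈ e.set) : d.Tangent e := by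
  refine le_antisymm ?_ (hP.add_radius_le_dist hd he hne)
  exact (dist_triangle_left _ _ x).trans (add_le_add hxd hxe)

theorem IsPacking.center_injOn (hP : IsPacking P) : InjOn Disk.center P := by
  intro d hd e he h
  by_contra hne
  have := hP.add_radius_le_dist hd he hne
  rw [h, dist_self] at this
  linarith [d.radius_pos, e.radius_pos]

theorem IsPacking.finite_inter_closedBall (hP : IsPacking P) {m : ℝ} (hm : 0 < m)
    (hlow : ∀ d ∈ P, m ≤ d.radius) (z : Plane) (B : ℝ) :
    {d ∈ P | d.center ∈ closedBall z B}.Finite := by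
  refine Set.Finite.of_finite_image ?_ (hP.center_injOn.mono (sep_subset _ _))
  by_contra hinf
  obtain ⟨a, -, ha⟩ := Set.Infinite.exists_accPt_of_subset_isCompact hinf (isCompact_closedBall z B)
    (image_subset_iff.2 fun d hd => hd.2)
  rw [accPt_iff_nhds] at ha
  obtain ⟨-, ⟨hda, d, hd, rfl⟩, hne⟩ := ha (ball a m) (ball_mem_nhds a hm)
  obtain ⟨-, ⟨hea, e, he, rfl⟩, -⟩ := ha (ball a (min m (dist d.center a)))
    (ball_mem_nhds a (lt_min hm (dist_pos.2 hne)))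
  rw [mem_ball, lt_min_iff] at hea
  have hde : d ≠ e := by
    rintro rfl
    exact hea.2.false
  have hsep := hP.add_radius_le_dist hd.1 he.1 hde
  have htri := dist_triangle_right d.center e.center a
  linarith [hlow d hd.1, hlow e he.1, mem_ball.1 hda]

theorem IsPacking.locallyFinite (hP : IsPacking P) {m M : ℝ} (hm : 0 < m)
    (hrad : ∀ d ∈ P, d.radius ∈ Icc m M) : LocallyFinite fun d : P => d.1.set := by
  intro z
  refine ⟨ball z 1, ball_mem_nhds z one_pos, ?_⟩
  refine Set.Finite.of_finite_image ?_ Subtype.val_injective.injOn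
  refine (hP.finite_inter_closedBall hm (fun d hd => (hrad d hd).1) z (M + 1)).subset ?_
  rintro _ ⟨⟨d, hd⟩, ⟨y, hyd, hyz⟩, rfl⟩
  refine ⟨hd, (dist_triangle_left _ _ y).trans (add_le_add (hyd.trans (hrad d hd).2) ?_)⟩
  exact (mem_ball.1 hyz).le

theorem isClosed_biUnion_disk (hlf : LocallyFinite fun d : P => d.1.set) {Q : Set Disk}
    (hQ : Q ⊆ P) : IsClosed (⋃ d ∈ Q, d.set) := by
  rw [biUnion_eq_iUnion]
  exact (hlf.comp_injective (inclusion_injective hQ)).isClosed_iUnion fun d => isClosed_closedBall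

theorem isOpen_compl_packingUnion (hlf : LocallyFinite fun d : P => d.1.set) :
    IsOpen (packingUnion P)ᶜ :=
  (isClosed_biUnion_disk hlf subset_rfl).isOpen_compl

/-- The hole of the packing around `x`: the component containing `x` of the complement of the
disks. It is empty when a disk covers `x`. -/
def hole (P : Set Disk) (x : Plane) : Set Plane := connectedComponentIn (packingUnion P)ᶜ x

/-- The rim of the hole around `x`: the disks of the packing meeting the closure of the hole. -/
def rim (P : Set Disk) (x : Plane) : Set Disk := {d ∈ P | (closure (hole P x) ∩ d.set).Nonempty}

/-- The contacts of `x`: the disks containing `x`, or the rim of its hole if there are none. -/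
def contacts (P : Set Disk) (x : Plane) : Set Disk := {d ∈ P | x ∈ d.set} ∪ rim P x

theorem contacts_subset : contacts P x ⊆ P := by
  rintro d (hd | hd) <;> exact hd.1

theorem contacts_of_mem (hx : x ∈ packingUnion P) : contacts P x = {d ∈ P | x ∈ d.set} := by
  have hhole : hole P x = ∅ := connectedComponentIn_eq_empty fun h => h hx
  simp [contacts, rim, hhole]

theorem contacts_of_notMem (hx : x ∉ packingUnion P) : contacts P x = rim P x := by
  refine union_eq_right.2 fun d hd => ?_
  exact absurd (mem_packingUnion.2 ⟨d, hd⟩) hx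

theorem hole_eq (h : y ∈ hole P x) : hole P y = hole P x := (connectedComponentIn_eq h).symm

theorem notMem_packingUnion_of_mem_hole (h : y ∈ hole P x) : y ∉ packingUnion P :=
  connectedComponentIn_subset _ _ h

theorem isOpen_hole (hlf : LocallyFinite fun d : P => d.1.set) : IsOpen (hole P x) :=
  (isOpen_compl_packingUnion hlf).connectedComponentIn

theorem exists_mem_rim_of_preconnected (hlf : LocallyFinite fun d : P => d.1.set)
    {S : Set Plane} (hS : IsPreconnected S) (hne : (S ∩ hole P x).Nonempty)
    (hnot : ¬ S ⊆ hole P x) : ∃ d ∈ rim P x, (S ∩ d.set).Nonempty := by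
  by_contra! h
  refine hnot (subset_connectedComponentIn_of_closure_inter_subset
    (isOpen_compl_packingUnion hlf) hS hne ?_)
  rintro z ⟨hzC, hzS⟩ hzP
  obtain ⟨d, hd, hzd⟩ := mem_packingUnion.1 hzP
  exact eq_empty_iff_forall_notMem.1 (h d ⟨hd, z, hzC, hzd⟩) z ⟨hzS, hzd⟩

theorem IsCompactPacking.exists_rim_eq (hC : IsCompactPacking P) (hx : x ∉ packingUnion P) :
    ∃ d₁ d₂ d₃ : Disk, d₁.Tangent d₂ ∧ d₁.Tangent d₃ ∧ d₂.Tangent d₃ ∧ rim P x = {d₁, d₂, d₃} := by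
  obtain ⟨-, d₁, d₂, d₃, -, -, -, -, -, -, h₁₂, h₁₃, h₂₃, hrim⟩ := hC.2 x hx
  exact ⟨d₁, d₂, d₃, h₁₂, h₁₃, h₂₃, hrim⟩

theorem IsCompactPacking.pairwise_tangent_rim (hC : IsCompactPacking P)
    (hx : x ∉ packingUnion P) : (rim P x).Pairwise Disk.Tangent := by
  obtain ⟨d₁, d₂, d₃, h₁₂, h₁₃, h₂₃, hrim⟩ := hC.exists_rim_eq hx
  have := h₁₂.symm
  have := h₁₃.symm
  have := h₂₃.symm
  rw [hrim]
  rintro d (rfl | rfl | rfl) e (rfl | rfl | rfl) hne <;> first | assumption | exact absurd rfl hne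

theorem IsCompactPacking.contacts_nonempty (hC : IsCompactPacking P) (x : Plane) :
    (contacts P x).Nonempty := by
  by_cases hx : x ∈ packingUnion P
  · rw [contacts_of_mem hx]
    exact mem_packingUnion.1 hx
  · obtain ⟨d₁, d₂, d₃, -, -, -, hrim⟩ := hC.exists_rim_eq hx
    rw [contacts_of_notMem hx, hrim]
    exact insert_nonempty _ _

theorem IsCompactPacking.pairwise_tangent_contacts (hC : IsCompactPacking P) (x : Plane) :
    (contacts P x).Pairwise Disk.Tangent := by
  by_cases hx : x ∈ packingUnion P
  · rw [contacts_of_mem hx]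
    exact fun d hd e he hne => hC.1.tangent_of_mem hd.1 he.1 hne hd.2 he.2
  · rw [contacts_of_notMem hx]
    exact hC.pairwise_tangent_rim hx

theorem eventually_inter_contacts_nonempty_of_mem (hlf : LocallyFinite fun d : P => d.1.set)
    (hx : x ∈ packingUnion P) : ∀ᶠ y in 𝓝 x, (contacts P x ∩ contacts P y).Nonempty := by
  obtain ⟨ε, hε, hnear⟩ := Metric.eventually_nhds_iff_ball.1
    (hlf.eventually_subset (fun _ => isClosed_closedBall) x)
  have hmem_of_meets : ∀ d ∈ P, ∀ z ∈ ball x ε, z ∈ d.set → d ∈ contacts P x :=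
    fun d hd z hz hzd => Or.inl ⟨hd, @hnear z hz ⟨d, hd⟩ hzd⟩
  filter_upwards [ball_mem_nhds x hε] with y hy
  by_cases hyP : y ∈ packingUnion P
  · obtain ⟨d, hd, hyd⟩ := mem_packingUnion.1 hyP
    exact ⟨d, hmem_of_meets d hd y hy hyd, Or.inl ⟨hd, hyd⟩⟩
  · obtain ⟨d, hd, z, hz, hzd⟩ := exists_mem_rim_of_preconnected hlf
      (convex_segment y x).isPreconnected
      ⟨y, left_mem_segment ℝ y x, mem_connectedComponentIn (F := (packingUnion P)ᶜ) hyP⟩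
      fun h => notMem_packingUnion_of_mem_hole (h (right_mem_segment ℝ y x)) hx
    have hzx := (convex_ball x ε).segment_subset hy (mem_ball_self hε) hz
    exact ⟨d, hmem_of_meets d hd.1 z hzx hzd, Or.inr hd⟩

theorem IsCompactPacking.eventually_inter_contacts_nonempty (hC : IsCompactPacking P)
    (hlf : LocallyFinite fun d : P => d.1.set) (x : Plane) :
    ∀ᶠ y in 𝓝 x, (contacts P x ∩ contacts P y).Nonempty := by
  by_cases hx : x ∈ packingUnion P
  · exact eventually_inter_contacts_nonempty_of_mem hlf hx
  · filter_upwards [(isOpen_hole hlf).mem_nhds (mem_connectedComponentIn hx)] with y hy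
    have hrim : rim P y = rim P x := by rw [rim, hole_eq hy, rim]
    rw [contacts_of_notMem hx, contacts_of_notMem (notMem_packingUnion_of_mem_hole hy), hrim,
      inter_self, ← contacts_of_notMem hx]
    exact hC.contacts_nonempty x

/-- The tangency graph of a family of disks, through which sizes propagate in a packing. -/
def tangencyGraph (P : Set Disk) : SimpleGraph P where
  Adj d e := d.1.Tangent e.1
  symm := ⟨fun _ _ => Disk.Tangent.symm⟩
  loopless := ⟨fun _ h => Disk.Tangent.ne h rfl⟩

theorem IsCompactPacking.reachable_of_mem_contacts (hC : IsCompactPacking P) {d e : P}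
    (hd : d.1 ∈ contacts P x) (he : e.1 ∈ contacts P x) : (tangencyGraph P).Reachable d e := by
  by_cases hde : d = e
  · rw [hde]
  · exact SimpleGraph.Adj.reachable
      (hC.pairwise_tangent_contacts x hd he fun h => hde (Subtype.ext h))

theorem IsCompactPacking.preconnected_tangencyGraph (hC : IsCompactPacking P)
    (hlf : LocallyFinite fun d : P => d.1.set) : (tangencyGraph P).Preconnected := by
  have key : ∀ x y : Plane, ∀ d e : P, d.1 ∈ contacts P x → e.1 ∈ contacts P y →
      (tangencyGraph P).Reachable d e := by
    intro x y
    refine isPreconnected_univ.induction₂ (fun x y => ∀ d e : P, d.1 ∈ contacts P x →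
      e.1 ∈ contacts P y → (tangencyGraph P).Reachable d e) ?_ ?_ ?_ (mem_univ x) (mem_univ y)
    · intro x _
      filter_upwards [nhdsWithin_le_nhds (hC.eventually_inter_contacts_nonempty hlf x)]
      rintro y ⟨c, hcx, hcy⟩ d e hd he
      have hcP := contacts_subset hcx
      exact (hC.reachable_of_mem_contacts (e := ⟨c, hcP⟩) hd hcx).trans
        (hC.reachable_of_mem_contacts hcy he)
    · rintro x y z - - - hxy hyz d e hd he
      obtain ⟨c, hc⟩ := hC.contacts_nonempty y
      exact (hxy d ⟨c, contacts_subset hc⟩ hd hc).trans (hyz _ e hc he)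
    · exact fun x y _ _ h d e hd he => (h e d he hd).symm
  exact fun d e => key d.1.center e.1.center d e
    (Or.inl ⟨d.2, mem_closedBall_self d.1.radius_pos.le⟩)
    (Or.inl ⟨e.2, mem_closedBall_self e.1.radius_pos.le⟩)

theorem IsCompactPacking.exists_tangent_of_mem_of_notMem (hC : IsCompactPacking P)
    (hlf : LocallyFinite fun d : P => d.1.set) {A : Set Disk} (hd : d ∈ P) (hdA : d ∈ A)
    (he : e ∈ P) (heA : e ∉ A) :
    ∃ d' ∈ P, ∃ e' ∈ P, d' ∈ A ∧ e' ∉ A ∧ d'.Tangent e' := by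
  obtain ⟨w⟩ := hC.preconnected_tangencyGraph hlf ⟨d, hd⟩ ⟨e, he⟩
  obtain ⟨a, -, hin, hout⟩ := w.exists_boundary_dart (Subtype.val ⁻¹' A) hdA heA
  exact ⟨a.fst, a.fst.2, a.snd, a.snd.2, hin, hout, a.adj⟩

end Packing

/-- The point with polar coordinates `(ρ, φ)` around `c`. -/
noncomputable def polar (c : Plane) (ρ φ : ℝ) : Plane := c + ρ • !₂[Real.cos φ, Real.sin φ]

section Polar

variable (c : Plane) (ρ σ φ ψ : ℝ)

theorem dist_polar_polar_sq :
    dist (polar c ρ φ) (polar c σ ψ) ^ 2 = ρ ^ 2 + σ ^ 2 - 2 * ρ * σ * Real.cos (φ - ψ) := by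
  have h : dist (polar c ρ φ) (polar c σ ψ) ^ 2 =
      (ρ * Real.cos φ - σ * Real.cos ψ) ^ 2 + (ρ * Real.sin φ - σ * Real.sin ψ) ^ 2 := by
    rw [EuclideanSpace.dist_eq, Real.sq_sqrt (by positivity)]
    simp [polar, Fin.sum_univ_two, Real.dist_eq, sq_abs]
  rw [h, Real.cos_sub]
  linear_combination ρ ^ 2 * Real.sin_sq_add_cos_sq φ + σ ^ 2 * Real.sin_sq_add_cos_sq ψ

theorem polar_zero : polar c 0 φ = c := by simp [polar]

theorem dist_polar_center {ρ : ℝ} (hρ : 0 ≤ ρ) : dist (polar c ρ φ) c = ρ := by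
  have h := dist_polar_polar_sq c ρ 0 φ φ
  rw [polar_zero] at h
  exact (pow_left_inj₀ dist_nonneg hρ two_ne_zero).1 (by linarith)

theorem polar_add_two_pi : polar c ρ (φ + 2 * Real.pi) = polar c ρ φ := by simp [polar]

theorem continuous_polar : Continuous fun q : ℝ × ℝ => polar c q.1 q.2 := by
  refine continuous_const.add (continuous_fst.smul ((PiLp.continuous_toLp 2 _).comp ?_))
  exact continuous_pi (Fin.forall_fin_two.2
    ⟨Real.continuous_cos.comp continuous_snd, Real.continuous_sin.comp continuous_snd⟩)

theorem exists_polar_eq (z : Plane) (φ₀ : ℝ) :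
    ∃ φ ∈ Ico φ₀ (φ₀ + 2 * Real.pi), z = polar c (dist z c) φ := by
  set w : ℂ := ⟨z 0 - c 0, z 1 - c 1⟩ with hw
  have hdist : dist z c = ‖w‖ := by
    rw [EuclideanSpace.dist_eq, Complex.norm_def, Complex.normSq_apply, Fin.sum_univ_two]
    simp only [Real.dist_eq, hw, sq, abs_mul_abs_self]
  refine ⟨toIcoMod Real.two_pi_pos φ₀ w.arg, toIcoMod_mem_Ico _ _ _, ?_⟩
  have hpolar : polar c (dist z c) (toIcoMod Real.two_pi_pos φ₀ w.arg) = polar c ‖w‖ w.arg := by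
    simp only [polar, hdist, toIcoMod, zsmul_eq_mul, Real.cos_sub_int_mul_two_pi,
      Real.sin_sub_int_mul_two_pi]
  rw [hpolar]
  ext i
  fin_cases i
  · simp [polar, Complex.norm_mul_cos_arg, hw]
  · simp [polar, Complex.norm_mul_sin_arg, hw]

end Polar

/-- The angle at the center of a disk of radius `a` in the triangle formed by the centers of three
pairwise tangent disks of radii `a`, `b` and `c`. -/
noncomputable def contactAngle (a b c : ℝ) : ℝ :=
  Real.arccos (1 - 2 * b * c / ((a + b) * (a + c)))

namespace Disk

variable {d e f : Disk} {φ ψ ρ : ℝ}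

/-- The disk `e` touches the disk `d` from outside in the direction `φ`. -/
def TouchesAt (d : Disk) (φ : ℝ) (e : Disk) : Prop :=
  e.center = polar d.center (d.radius + e.radius) φ

theorem TouchesAt.tangent (h : d.TouchesAt φ e) : d.Tangent e := by
  rw [Tangent, dist_comm, h]
  exact dist_polar_center _ _ (add_pos d.radius_pos e.radius_pos).le

theorem Tangent.exists_touchesAt (h : d.Tangent e) (φ₀ : ℝ) :
    ∃ φ ∈ Ico φ₀ (φ₀ + 2 * Real.pi), d.TouchesAt φ e := by
  obtain ⟨φ, hφ, he⟩ := exists_polar_eq d.center e.center φ₀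
  rw [dist_comm, h] at he
  exact ⟨φ, hφ, he⟩

theorem touchesAt_add_two_pi : d.TouchesAt (φ + 2 * Real.pi) e ↔ d.TouchesAt φ e := by
  rw [TouchesAt, TouchesAt, polar_add_two_pi]

theorem TouchesAt.polar_mem (h : d.TouchesAt φ e) : polar d.center d.radius φ ∈ e.set := by
  have hsq := dist_polar_polar_sq d.center d.radius (d.radius + e.radius) φ φ
  rw [← h, sub_self, Real.cos_zero] at hsq
  exact abs_le_of_sq_le_sq' (by linarith) e.radius_pos.le |>.2

theorem TouchesAt.cos_sub_eq (he : d.TouchesAt φ e) (hf : d.TouchesAt ψ f) (hef : e.Tangent f) :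
    Real.cos (ψ - φ) = 1 - 2 * e.radius * f.radius /
      ((d.radius + e.radius) * (d.radius + f.radius)) := by
  have hd := d.radius_pos
  have := e.radius_pos
  have := f.radius_pos
  have hsq := dist_polar_polar_sq d.center (d.radius + e.radius) (d.radius + f.radius) φ ψ
  rw [← he, ← hf, hef, ← neg_sub ψ φ, Real.cos_neg] at hsq
  field_simp
  linarith

theorem TouchesAt.angle_eq (hφ : d.TouchesAt φ e) (hψ : d.TouchesAt ψ e)
    (h : |φ - ψ| < 2 * Real.pi) : φ = ψ := by
  have hR : 0 < d.radius + e.radius := add_pos d.radius_pos e.radius_pos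
  have hsq := dist_polar_polar_sq d.center (d.radius + e.radius) (d.radius + e.radius) φ ψ
  rw [← hφ, ← hψ, dist_self] at hsq
  have hcos : Real.cos (φ - ψ) = 1 := mul_left_cancel₀ (pow_pos hR 2).ne' (by linarith)
  rw [abs_lt] at h
  exact sub_eq_zero.1 ((Real.cos_eq_one_iff_of_lt_of_lt h.1 h.2).1 hcos)

theorem TouchesAt.cos_pos_of_polar_mem (h : d.TouchesAt ψ e) (hρ : d.radius < ρ)
    (hmem : polar d.center ρ φ ∈ e.set) : 0 < Real.cos (φ - ψ) := by
  have hd := d.radius_pos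
  have he := e.radius_pos
  have hsq := dist_polar_polar_sq d.center ρ (d.radius + e.radius) φ ψ
  rw [← h] at hsq
  have hle := pow_le_pow_left₀ dist_nonneg (show dist (polar d.center ρ φ) e.center ≤ _ from hmem) 2
  by_contra! hcos
  have hprod : 0 ≤ ρ * (d.radius + e.radius) * -Real.cos (φ - ψ) :=
    mul_nonneg (mul_nonneg (hd.trans hρ).le (add_pos hd he).le) (neg_nonneg.2 hcos)
  nlinarith

end Disk

namespace IsPacking

variable {P : Set Disk} {d e f : Disk} {φ : ℝ}

theorem eq_of_touchesAt (hP : IsPacking P) (he : e ∈ P) (hf : f ∈ P) (hde : d.TouchesAt φ e)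
    (hdf : d.TouchesAt φ f) : e = f := by
  by_contra hne
  have hsep := hP.add_radius_le_dist he hf hne
  have hsq := dist_polar_polar_sq d.center (d.radius + e.radius) (d.radius + f.radius) φ φ
  rw [← hde, ← hdf, sub_self, Real.cos_zero] at hsq
  nlinarith [e.radius_pos, f.radius_pos]

theorem touchesAt_of_polar_mem (hP : IsPacking P) (hd : d ∈ P) (he : e ∈ P) (hne : e ≠ d)
    (h : polar d.center d.radius φ ∈ e.set) : d.TouchesAt φ e := by
  have hdpos := d.radius_pos
  have hmem : polar d.center d.radius φ ∈ d.set := (dist_polar_center _ _ hdpos.le).le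
  have htan : d.Tangent e := hP.tangent_of_mem hd he hne.symm hmem h
  obtain ⟨ψ, -, hψ⟩ := htan.exists_touchesAt 0
  have hR : 0 < d.radius + e.radius := add_pos hdpos e.radius_pos
  have hle := pow_le_pow_left₀ dist_nonneg
    (show dist (polar d.center d.radius φ) e.center ≤ _ from h) 2
  rw [hψ, dist_polar_polar_sq] at hle
  have hcos : 1 ≤ Real.cos (φ - ψ) := by
    have : d.radius * (d.radius + e.radius) * 1
        ≤ d.radius * (d.radius + e.radius) * Real.cos (φ - ψ) := by linarith
    exact le_of_mul_le_mul_left this (mul_pos hdpos hR)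
  have hsq := dist_polar_polar_sq d.center (d.radius + e.radius) (d.radius + e.radius) φ ψ
  rw [le_antisymm (Real.cos_le_one _) hcos] at hsq
  have hdist := pow_eq_zero_iff two_ne_zero |>.1 (hsq.trans (by ring))
  exact hψ.trans (dist_eq_zero.1 hdist).symm

end IsPacking

namespace Disk

/-- Leaving the disk `d` in the direction `φ`, one first travels inside the set `C`. -/
def OpensInto (d : Disk) (φ : ℝ) (C : Set Plane) : Prop :=
  ∀ᶠ ρ in 𝓝[>] d.radius, polar d.center ρ φ ∈ C

variable {P : Set Disk} {d : Disk} {φ : ℝ} {x y : Plane}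

theorem OpensInto.hole_eq (hx : d.OpensInto φ (hole P x)) (hy : d.OpensInto φ (hole P y)) :
    hole P x = hole P y := by
  obtain ⟨ρ, hρx, hρy⟩ := (hx.and hy).exists
  rw [← _root_.hole_eq hρx, ← _root_.hole_eq hρy]

theorem OpensInto.polar_mem_closure {C : Set Plane} (h : d.OpensInto φ C) :
    polar d.center d.radius φ ∈ closure C := by
  have hcont : Continuous fun ρ => polar d.center ρ φ :=
    (continuous_polar d.center).comp (continuous_id.prodMk continuous_const)
  exact mem_closure_of_tendsto (hcont.continuousWithinAt (s := Ioi d.radius)) h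

end Disk

section FreeArc

variable {P : Set Disk} {d e f : Disk} {φ φ₀ φ₁ : ℝ} {x : Plane}

theorem eventually_polar_notMem_packingUnion (hP : IsPacking P)
    (hlf : LocallyFinite fun d : P => d.1.set) (hd : d ∈ P)
    (hfree : ∀ e ∈ P, ¬ d.TouchesAt φ e) :
    ∀ᶠ q in 𝓝[>] d.radius ×ˢ 𝓝 φ, polar d.center q.1 q.2 ∉ packingUnion P := by
  have hcl : IsClosed (⋃ e ∈ P \ {d}, e.set) := isClosed_biUnion_disk hlf sdiff_subset
  have hnot : polar d.center d.radius φ ∉ ⋃ e ∈ P \ {d}, e.set := by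
    simp only [mem_iUnion, not_exists]
    exact fun e he hmem => hfree e he.1 (hP.touchesAt_of_polar_mem hd he.1 he.2 hmem)
  have hnear : ∀ᶠ q in 𝓝 (d.radius, φ), polar d.center q.1 q.2 ∉ ⋃ e ∈ P \ {d}, e.set :=
    (hcl.isOpen_compl.preimage (continuous_polar d.center)).mem_nhds hnot
  rw [nhds_prod_eq] at hnear
  filter_upwards [prod_mono_left _ nhdsWithin_le_nhds hnear,
    Eventually.prod_inl (eventually_mem_nhdsWithin (a := d.radius) (s := Ioi d.radius)) (𝓝 φ)]
    with q hq hρ hmem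
  obtain ⟨e, he, hqe⟩ := mem_packingUnion.1 hmem
  have hed : e ≠ d := by
    rintro rfl
    exact hρ.not_ge ((dist_polar_center _ _ (e.radius_pos.trans hρ).le).symm.trans_le hqe)
  exact hq (mem_biUnion (show e ∈ P \ {d} from ⟨he, hed⟩) hqe)

theorem exists_eventually_opensInto (hP : IsPacking P)
    (hlf : LocallyFinite fun d : P => d.1.set) (hd : d ∈ P)
    (hfree : ∀ e ∈ P, ¬ d.TouchesAt φ e) :
    ∃ x ∉ packingUnion P, ∀ᶠ ψ in 𝓝 φ, d.OpensInto ψ (hole P x) := by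
  obtain ⟨⟨b, η⟩, ⟨hb, hη⟩, hbox⟩ := ((nhdsGT_basis d.radius).prod (nhds_basis_Ioo_pos φ)).mem_iff.1
    (eventually_polar_notMem_packingUnion hP hlf hd hfree)
  simp only at hb hη hbox
  have hconn : IsPreconnected ((fun q : ℝ × ℝ => polar d.center q.1 q.2) ''
      Ioo d.radius b ×ˢ Ioo (φ - η) (φ + η)) :=
    (isPreconnected_Ioo.prod isPreconnected_Ioo).image _ (continuous_polar d.center).continuousOn
  obtain ⟨ρ, hρ⟩ := nonempty_Ioo.2 hb
  have hmem : (ρ, φ) ∈ Ioo d.radius b ×ˢ Ioo (φ - η) (φ + η) :=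
    ⟨hρ, by constructor <;> simp [hη]⟩
  have hsub := hconn.subset_connectedComponentIn (mem_image_of_mem _ hmem)
    (F := (packingUnion P)ᶜ) (image_subset_iff.2 hbox)
  refine ⟨polar d.center ρ φ, hbox hmem, ?_⟩
  filter_upwards [Ioo_mem_nhds (sub_lt_self φ hη) (lt_add_of_pos_right φ hη)] with ψ hψ
  filter_upwards [Ioo_mem_nhdsGT hb] with σ hσ
  exact hsub ⟨(σ, ψ), ⟨hσ, hψ⟩, rfl⟩

theorem exists_forall_opensInto (hP : IsPacking P) (hlf : LocallyFinite fun d : P => d.1.set)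
    (hd : d ∈ P) (hφ : φ₀ < φ₁) (hfree : ∀ φ ∈ Ioo φ₀ φ₁, ∀ e ∈ P, ¬ d.TouchesAt φ e) :
    ∃ x ∉ packingUnion P, ∀ φ ∈ Ioo φ₀ φ₁, d.OpensInto φ (hole P x) := by
  have hrel : ∀ φ ∈ Ioo φ₀ φ₁, ∀ ψ ∈ Ioo φ₀ φ₁, ∃ x ∉ packingUnion P,
      d.OpensInto φ (hole P x) ∧ d.OpensInto ψ (hole P x) := by
    intro φ hφ ψ hψ
    refine isPreconnected_Ioo.induction₂ (fun φ ψ => ∃ x ∉ packingUnion P,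
      d.OpensInto φ (hole P x) ∧ d.OpensInto ψ (hole P x)) ?_ ?_ ?_ hφ hψ
    · intro φ hφ
      obtain ⟨x, hx, hnear⟩ := exists_eventually_opensInto hP hlf hd (hfree φ hφ)
      filter_upwards [nhdsWithin_le_nhds hnear] with ψ hψ
      exact ⟨x, hx, hnear.self_of_nhds, hψ⟩
    · rintro φ ψ χ - - - ⟨x, hx, hφx, hψx⟩ ⟨y, -, hψy, hχy⟩
      exact ⟨x, hx, hφx, hψx.hole_eq hψy ▸ hχy⟩
    · rintro φ ψ - - ⟨x, hx, hφx, hψx⟩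
      exact ⟨x, hx, hψx, hφx⟩
  obtain ⟨φ, hφ⟩ := nonempty_Ioo.2 hφ
  obtain ⟨x, hx, hφx, -⟩ := hrel φ hφ φ hφ
  refine ⟨x, hx, fun ψ hψ => ?_⟩
  obtain ⟨y, -, hφy, hψy⟩ := hrel φ hφ ψ hψ
  exact hφy.hole_eq hφx ▸ hψy

theorem polar_mem_closure_of_forall_opensInto {C : Set Plane} (hφ : φ₀ < φ₁)
    (hopen : ∀ φ ∈ Ioo φ₀ φ₁, d.OpensInto φ C) (h : φ ∈ Icc φ₀ φ₁) :
    polar d.center d.radius φ ∈ closure C := by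
  have hcont : Continuous fun φ => polar d.center d.radius φ :=
    (continuous_polar d.center).comp (continuous_const.prodMk continuous_id)
  have hsub := closure_minimal (fun φ hφ => (hopen φ hφ).polar_mem_closure)
    (isClosed_closure.preimage hcont)
  rw [closure_Ioo hφ.ne] at hsub
  exact hsub h

theorem Disk.OpensInto.self_mem_rim (hd : d ∈ P) (hopen : d.OpensInto φ (hole P x)) :
    d ∈ rim P x :=
  ⟨hd, _, hopen.polar_mem_closure, (dist_polar_center _ _ d.radius_pos.le).le⟩

theorem mem_rim_of_touchesAt (hφ : φ₀ < φ₁) (hopen : ∀ φ ∈ Ioo φ₀ φ₁, d.OpensInto φ (hole P x))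
    (he : e ∈ P) (h : φ ∈ Icc φ₀ φ₁) (hde : d.TouchesAt φ e) : e ∈ rim P x :=
  ⟨he, _, polar_mem_closure_of_forall_opensInto hφ hopen h, hde.polar_mem⟩

theorem Disk.OpensInto.exists_polar_mem_rim (hlf : LocallyFinite fun d : P => d.1.set)
    (hbdd : Bornology.IsBounded (hole P x)) (hopen : d.OpensInto φ (hole P x)) :
    ∃ g ∈ rim P x, ∃ ρ > d.radius, polar d.center ρ φ ∈ g.set := by
  have hcont : Continuous fun ρ => polar d.center ρ φ :=
    (continuous_polar d.center).comp (continuous_id.prodMk continuous_const)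
  obtain ⟨ρ, hρC, hρ⟩ := (hopen.and eventually_mem_nhdsWithin).exists
  obtain ⟨g, hg, -, ⟨σ, hσ, rfl⟩, hmem⟩ := exists_mem_rim_of_preconnected hlf
    (isPreconnected_Ioi.image _ (hcont.continuousOn (s := Ioi d.radius)))
    ⟨_, mem_image_of_mem _ hρ, hρC⟩ fun hsub => by
      obtain ⟨B, hB⟩ := (hbdd.subset hsub).subset_closedBall d.center
      have hmax : d.radius < max d.radius B + 1 := by linarith [le_max_left d.radius B]
      have hdist := hB (mem_image_of_mem _ (mem_Ioi.2 hmax))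
      rw [mem_closedBall, dist_polar_center _ _ (d.radius_pos.trans hmax).le] at hdist
      linarith [le_max_right d.radius B]
  exact ⟨g, hg, σ, hσ, hmem⟩

theorem IsCompactPacking.ncard_rim (hC : IsCompactPacking P) (hx : x ∉ packingUnion P) :
    (rim P x).ncard = 3 := by
  obtain ⟨d₁, d₂, d₃, h₁₂, h₁₃, h₂₃, hrim⟩ := hC.exists_rim_eq hx
  exact ncard_eq_three.2 ⟨d₁, d₂, d₃, h₁₂.ne, h₁₃.ne, h₂₃.ne, hrim⟩

theorem IsCompactPacking.exists_mem_rim_ne (hC : IsCompactPacking P) (hx : x ∉ packingUnion P)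
    (d e : Disk) : ∃ g ∈ rim P x, g ≠ d ∧ g ≠ e := by
  have hlt : ({d, e} : Set Disk).ncard < (rim P x).ncard := by
    rw [hC.ncard_rim hx]
    exact (ncard_insert_le d {e}).trans_lt (by rw [ncard_singleton]; norm_num)
  obtain ⟨g, hg, hne⟩ := exists_mem_notMem_of_ncard_lt_ncard hlt
  exact ⟨g, hg, by simpa using hne⟩

theorem IsCompactPacking.rim_eq (hC : IsCompactPacking P) (hx : x ∉ packingUnion P)
    (hd : d ∈ rim P x) (he : e ∈ rim P x) (hf : f ∈ rim P x) (hde : d ≠ e) (hdf : d ≠ f)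
    (hef : e ≠ f) : rim P x = {d, e, f} := by
  refine (eq_of_subset_of_ncard_le ?_ ?_ ?_).symm
  · rintro g (rfl | rfl | rfl) <;> assumption
  · rw [hC.ncard_rim hx, ncard_eq_three.2 ⟨d, e, f, hde, hdf, hef, rfl⟩]
  · exact finite_of_ncard_pos (by simp [hC.ncard_rim hx])

theorem IsCompactPacking.exists_tangent (hC : IsCompactPacking P)
    (hlf : LocallyFinite fun d : P => d.1.set) (hd : d ∈ P) : ∃ e ∈ P, d.Tangent e := by
  by_contra! hno
  obtain ⟨x, hx, hopen⟩ := exists_forall_opensInto hC.1 hlf hd zero_lt_one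
    fun φ _ e he h => hno e he h.tangent
  obtain ⟨φ, hφ⟩ := nonempty_Ioo.2 (zero_lt_one (α := ℝ))
  obtain ⟨e, he, hne, -⟩ := hC.exists_mem_rim_ne hx d d
  exact hno e he.1 (hC.pairwise_tangent_rim hx ((hopen φ hφ).self_mem_rim hd) he hne.symm)

/-- Otherwise the arc goes once around `d`, and the third disk of the rim touches it nowhere. -/
theorem IsCompactPacking.ne_of_free_arc (hC : IsCompactPacking P) (hd : d ∈ P)
    (hx : x ∉ packingUnion P) (hφ : φ₀ < φ₁) (hlen : φ₁ ≤ φ₀ + 2 * Real.pi)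
    (hfree : ∀ φ ∈ Ioo φ₀ φ₁, ∀ e ∈ P, ¬ d.TouchesAt φ e)
    (hopen : ∀ φ ∈ Ioo φ₀ φ₁, d.OpensInto φ (hole P x))
    (he : e ∈ P) (hde : d.TouchesAt φ₀ e) (hdf : d.TouchesAt φ₁ f) : e ≠ f := by
  rintro rfl
  obtain ⟨φ, hφ'⟩ := nonempty_Ioo.2 hφ
  have hturn : φ₁ = φ₀ + 2 * Real.pi := by
    by_contra hne
    refine hφ.ne (hde.angle_eq hdf ?_)
    rw [abs_sub_comm, abs_of_pos (sub_pos.2 hφ)]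
    linarith [lt_of_le_of_ne hlen hne]
  obtain ⟨g, hg, hgd, hge⟩ := hC.exists_mem_rim_ne hx d e
  obtain ⟨ψ, hψ, hdg⟩ := (hC.pairwise_tangent_rim hx ((hopen φ hφ').self_mem_rim hd) hg
    hgd.symm).exists_touchesAt φ₀
  have hne : φ₀ ≠ ψ := by
    rintro rfl
    exact hge (hC.1.eq_of_touchesAt hg.1 he hdg hde)
  exact hfree ψ ⟨lt_of_le_of_ne hψ.1 hne, hturn ▸ hψ.2⟩ g hg.1 hdg

theorem IsCompactPacking.sub_le_pi_of_free_arc (hC : IsCompactPacking P)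
    (hlf : LocallyFinite fun d : P => d.1.set) (hx : x ∉ packingUnion P)
    (hlen : φ₁ ≤ φ₀ + 2 * Real.pi) (hopen : ∀ φ ∈ Ioo φ₀ φ₁, d.OpensInto φ (hole P x))
    (hde : d.TouchesAt φ₀ e) (hdf : d.TouchesAt φ₁ f) (hrim : rim P x = {d, e, f}) :
    φ₁ - φ₀ ≤ Real.pi := by
  by_contra! hlt
  obtain ⟨g, hg, ρ, hρ, hmem⟩ := (hopen ((φ₀ + φ₁) / 2)
    ⟨by linarith, by linarith⟩).exists_polar_mem_rim hlf (hC.2 x hx).1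
  rw [hrim] at hg
  obtain rfl | rfl | rfl := hg
  · exact hρ.not_ge ((dist_polar_center _ _ (g.radius_pos.trans hρ).le).symm.trans_le hmem)
  · refine (hde.cos_pos_of_polar_mem hρ hmem).not_ge ?_
    exact Real.cos_nonpos_of_pi_div_two_le_of_le (by linarith) (by linarith)
  · refine (hdf.cos_pos_of_polar_mem hρ hmem).not_ge ?_
    rw [← Real.cos_neg]
    exact Real.cos_nonpos_of_pi_div_two_le_of_le (by linarith) (by linarith)

theorem IsCompactPacking.tangent_and_sub_eq_contactAngle (hC : IsCompactPacking P)
    (hlf : LocallyFinite fun d : P => d.1.set) (hd : d ∈ P) (he : e ∈ P) (hf : f ∈ P)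
    (hde : d.TouchesAt φ₀ e) (hdf : d.TouchesAt φ₁ f) (hφ : φ₀ < φ₁)
    (hlen : φ₁ ≤ φ₀ + 2 * Real.pi) (hfree : ∀ φ ∈ Ioo φ₀ φ₁, ∀ e ∈ P, ¬ d.TouchesAt φ e) :
    e.Tangent f ∧ φ₁ - φ₀ = contactAngle d.radius e.radius f.radius := by
  obtain ⟨x, hx, hopen⟩ := exists_forall_opensInto hC.1 hlf hd hφ hfree
  obtain ⟨φ, hφ'⟩ := nonempty_Ioo.2 hφ
  have hdR := (hopen φ hφ').self_mem_rim hd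
  have heR := mem_rim_of_touchesAt hφ hopen he (left_mem_Icc.2 hφ.le) hde
  have hfR := mem_rim_of_touchesAt hφ hopen hf (right_mem_Icc.2 hφ.le) hdf
  have hef : e ≠ f := hC.ne_of_free_arc hd hx hφ hlen hfree hopen he hde hdf
  have htan : e.Tangent f := hC.pairwise_tangent_rim hx heR hfR hef
  have hrim := hC.rim_eq hx hdR heR hfR hde.tangent.ne hdf.tangent.ne hef
  refine ⟨htan, ?_⟩
  rw [contactAngle, ← hde.cos_sub_eq hdf htan, Real.arccos_cos (sub_pos.2 hφ).le
    (hC.sub_le_pi_of_free_arc hlf hx hlen hopen hde hdf hrim)]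

end FreeArc

theorem exists_consecutive_enumeration {α : Type*} [LinearOrder α] {F : Finset α} {a b : α}
    (ha : IsLeast (F : Set α) a) (hb : IsGreatest (F : Set α) b) :
    ∃ (n : ℕ) (t : ℕ → α), t 0 = a ∧ t n = b ∧ (∀ i, t i ∈ F) ∧ (∀ y ∈ F, ∃ i ≤ n, t i = y) ∧
      ∀ i < n, t i < t (i + 1) ∧ ∀ y, t i < y → y < t (i + 1) → y ∉ F := by
  obtain ⟨n, hn⟩ : ∃ n, F.card = n + 1 :=
    Nat.exists_eq_succ_of_ne_zero (Finset.card_ne_zero_of_mem (Finset.mem_coe.1 ha.1))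
  have hsurj : ∀ y ∈ F, ∃ j, F.orderEmbOfFin hn j = y := fun y hy => by
    rwa [← mem_range, Finset.range_orderEmbOfFin]
  refine ⟨n, fun i => F.orderEmbOfFin hn ⟨min i n, by omega⟩, ?_, ?_,
    fun i => F.orderEmbOfFin_mem hn _, fun y hy => ?_, fun i hi => ⟨?_, fun y hly hyu hy => ?_⟩⟩
  · obtain ⟨j, rfl⟩ := hsurj a ha.1
    exact le_antisymm ((F.orderEmbOfFin hn).monotone (by simp))
      (ha.2 (F.orderEmbOfFin_mem hn _))
  · obtain ⟨j, rfl⟩ := hsurj b hb.1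
    exact le_antisymm (hb.2 (F.orderEmbOfFin_mem hn _))
      ((F.orderEmbOfFin hn).monotone (Fin.le_def.2 (by simp [j.is_le])))
  · obtain ⟨j, rfl⟩ := hsurj y hy
    exact ⟨j, j.is_le, congrArg _ (Fin.ext (min_eq_left j.is_le))⟩
  · exact (F.orderEmbOfFin hn).strictMono (Fin.lt_def.2 (by simp; omega))
  · obtain ⟨j, rfl⟩ := hsurj y hy
    rw [(F.orderEmbOfFin hn).lt_iff_lt, Fin.lt_def] at hly hyu
    simp only at hly hyu
    omega

/-- The disks `f 0, …, f (n - 1)` are the neighbours of `d` in the packing `P`, listed in cyclic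
order around `d`. -/
structure IsCorona (P : Set Disk) (d : Disk) (n : ℕ) (f : ℕ → Disk) : Prop where
  closed : f n = f 0
  mem (i : ℕ) : f i ∈ P
  tangent (i : ℕ) : d.Tangent (f i)
  exists_eq : ∀ e ∈ P, d.Tangent e → ∃ i < n, f i = e
  consecutive : ∀ i < n, (f i).Tangent (f (i + 1))
  sum_angle : ∑ i ∈ Finset.range n, contactAngle d.radius (f i).radius (f (i + 1)).radius =
    2 * Real.pi

section Corona

variable {P : Set Disk} {d : Disk}

theorem finite_neighbours (hlf : LocallyFinite fun d : P => d.1.set) (d : Disk) :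
    {e : P | d.Tangent e}.Finite := by
  refine (hlf.finite_nonempty_inter_compact (isCompact_closedBall d.center d.radius)).subset ?_
  intro e he
  obtain ⟨φ, -, hφ⟩ := Disk.Tangent.exists_touchesAt he 0
  exact ⟨_, hφ.polar_mem, (dist_polar_center _ _ d.radius_pos.le).le⟩

theorem exists_finset_contact_angles (hlf : LocallyFinite fun d : P => d.1.set) {φ₀ : ℝ}
    (h₀ : ∃ e ∈ P, d.TouchesAt φ₀ e) :
    ∃ F : Finset ℝ, IsLeast (F : Set ℝ) φ₀ ∧ IsGreatest (F : Set ℝ) (φ₀ + 2 * Real.pi) ∧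
      ∀ φ ∈ Icc φ₀ (φ₀ + 2 * Real.pi), φ ∈ F ↔ ∃ e ∈ P, d.TouchesAt φ e := by
  have hlt : φ₀ < φ₀ + 2 * Real.pi := lt_add_of_pos_right _ Real.two_pi_pos
  have hfin : {φ ∈ Icc φ₀ (φ₀ + 2 * Real.pi) | ∃ e ∈ P, d.TouchesAt φ e}.Finite := by
    refine (((finite_neighbours hlf d).biUnion (t := fun e =>
      {φ ∈ Ico φ₀ (φ₀ + 2 * Real.pi) | d.TouchesAt φ e.1}) fun e _ => ?_).insert
        (φ₀ + 2 * Real.pi)).subset ?_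
    · refine Set.Subsingleton.finite fun φ hφ ψ hψ => hφ.2.angle_eq hψ.2 (abs_lt.2 ?_)
      constructor <;> linarith [hφ.1.1, hφ.1.2, hψ.1.1, hψ.1.2]
    · rintro φ ⟨hφ, e, he, hde⟩
      rcases hφ.2.eq_or_lt with rfl | hφlt
      · exact mem_insert _ _
      · exact mem_insert_of_mem _ (mem_biUnion (x := (⟨e, he⟩ : P)) hde.tangent ⟨⟨hφ.1, hφlt⟩, hde⟩)
  have h₁ : ∃ e ∈ P, d.TouchesAt (φ₀ + 2 * Real.pi) e := by
    simpa only [Disk.touchesAt_add_two_pi] using h₀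
  refine ⟨hfin.toFinset, ?_, ?_, fun φ hφ => by simp [hφ.1, hφ.2]⟩ <;> rw [hfin.coe_toFinset]
  · exact ⟨⟨left_mem_Icc.2 hlt.le, h₀⟩, fun φ hφ => hφ.1.1⟩
  · exact ⟨⟨right_mem_Icc.2 hlt.le, h₁⟩, fun φ hφ => hφ.1.2⟩

theorem IsCompactPacking.exists_corona (hC : IsCompactPacking P)
    (hlf : LocallyFinite fun d : P => d.1.set) (hd : d ∈ P) : ∃ n f, IsCorona P d n f := by
  obtain ⟨e₀, he₀, htan₀⟩ := hC.exists_tangent hlf hd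
  obtain ⟨φ₀, -, h₀⟩ := htan₀.exists_touchesAt 0
  obtain ⟨F, hleast, hgreatest, hF⟩ := exists_finset_contact_angles hlf ⟨e₀, he₀, h₀⟩
  have hIcc : ∀ φ ∈ F, φ ∈ Icc φ₀ (φ₀ + 2 * Real.pi) := fun φ hφ => ⟨hleast.2 hφ, hgreatest.2 hφ⟩
  obtain ⟨n, t, ht0, htn, htF, hsurj, hstep⟩ := exists_consecutive_enumeration hleast hgreatest
  choose f hfP hf using fun i => (hF (t i) (hIcc _ (htF i))).1 (htF i)
  have hgap : ∀ i < n, (f i).Tangent (f (i + 1)) ∧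
      t (i + 1) - t i = contactAngle d.radius (f i).radius (f (i + 1)).radius := fun i hi => by
    have hi0 := hIcc _ (htF i)
    have hi1 := hIcc _ (htF (i + 1))
    refine hC.tangent_and_sub_eq_contactAngle hlf hd (hfP i) (hfP (i + 1)) (hf i) (hf (i + 1))
      (hstep i hi).1 (by linarith [hi0.1, hi1.2]) fun φ hφ e he hde => ?_
    exact (hstep i hi).2 φ hφ.1 hφ.2
      ((hF φ ⟨hi0.1.trans hφ.1.le, hφ.2.le.trans hi1.2⟩).2 ⟨e, he, hde⟩)
  refine ⟨n, f, ?_, hfP, fun i => (hf i).tangent, fun e he htan => ?_,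
    fun i hi => (hgap i hi).1, ?_⟩
  · refine hC.1.eq_of_touchesAt (hfP n) (hfP 0) (φ := φ₀) ?_ (ht0 ▸ hf 0)
    exact Disk.touchesAt_add_two_pi.1 (htn ▸ hf n)
  · obtain ⟨φ, hφ, hde⟩ := htan.exists_touchesAt φ₀
    obtain ⟨i, hi, rfl⟩ := hsurj φ ((hF φ (Ico_subset_Icc_self hφ)).2 ⟨e, he, hde⟩)
    have hin : i ≠ n := by
      rintro rfl
      exact hφ.2.ne htn
    exact ⟨i, lt_of_le_of_ne hi hin, hC.1.eq_of_touchesAt (hfP i) he (hf i) hde⟩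
  · rw [← Finset.sum_congr rfl fun i hi => (hgap i (Finset.mem_range.1 hi)).2,
      Finset.sum_range_sub, ht0, htn]
    ring

end Corona

section ContactAngle

variable {a b c a' b' c' : ℝ}

theorem contactAngle_comm (a b c : ℝ) : contactAngle a b c = contactAngle a c b := by
  rw [contactAngle, contactAngle, mul_right_comm, mul_comm (a + b)]

theorem contactAngle_eq_arccos (ha : 0 < a) (hb : 0 < b) (hc : 0 < c) :
    contactAngle a b c = Real.arccos (1 - 2 * (b / (a + b) * (c / (a + c)))) := by
  rw [contactAngle]
  congr 2
  field_simp

theorem div_add_le_div_add (ha : 0 < a) (hb : 0 < b) (ha' : 0 < a') (hb' : 0 < b')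
    (h : b * a' ≤ b' * a) : b / (a + b) ≤ b' / (a' + b') := by
  rw [div_le_div_iff₀ (by positivity) (by positivity)]
  linarith

theorem div_add_lt_div_add (ha : 0 < a) (hb : 0 < b) (ha' : 0 < a') (hb' : 0 < b')
    (h : b * a' < b' * a) : b / (a + b) < b' / (a' + b') := by
  rw [div_lt_div_iff₀ (by positivity) (by positivity)]
  linarith

theorem div_add_mul_div_add_lt_one (ha : 0 < a) (hb : 0 < b) (hc : 0 < c) :
    b / (a + b) * (c / (a + c)) < 1 :=
  mul_lt_one_of_nonneg_of_lt_one_left (by positivity)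
    ((div_lt_one (by positivity)).2 (by linarith)) ((div_lt_one (by positivity)).2 (by linarith)).le

theorem contactAngle_lt_pi (ha : 0 < a) (hb : 0 < b) (hc : 0 < c) :
    contactAngle a b c < Real.pi := by
  have hlt := div_add_mul_div_add_lt_one ha hb hc
  have hpos : 0 < b / (a + b) * (c / (a + c)) := by positivity
  rw [contactAngle_eq_arccos ha hb hc, ← Real.arccos_neg_one]
  exact Real.arccos_lt_arccos le_rfl (by linarith) (by linarith)

theorem contactAngle_self (ha : 0 < a) : contactAngle a a a = Real.pi / 3 := by
  have hcos : 1 - 2 * a * a / ((a + a) * (a + a)) = Real.cos (Real.pi / 3) := by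
    rw [Real.cos_pi_div_three]
    field_simp
    norm_num
  rw [contactAngle, hcos, Real.arccos_cos] <;> linarith [Real.pi_pos]

theorem contactAngle_self_left_lt_pi_div_two (ha : 0 < a) (hc : 0 < c) :
    contactAngle a a c < Real.pi / 2 := by
  have hlt : c / (a + c) < 1 := (div_lt_one (by positivity)).2 (by linarith)
  have hhalf : a / (a + a) = 1 / 2 := by field_simp; norm_num
  rw [contactAngle_eq_arccos ha ha hc, Real.arccos_lt_pi_div_two, hhalf]
  linarith

theorem contactAngle_le_contactAngle (ha : 0 < a) (hb : 0 < b) (hc : 0 < c) (ha' : 0 < a')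
    (hb' : 0 < b') (hc' : 0 < c') (hbb' : b * a' ≤ b' * a) (hcc' : c * a' ≤ c' * a) :
    contactAngle a b c ≤ contactAngle a' b' c' := by
  rw [contactAngle_eq_arccos ha hb hc, contactAngle_eq_arccos ha' hb' hc']
  refine Real.arccos_le_arccos (sub_le_sub_left (mul_le_mul_of_nonneg_left ?_ two_pos.le) 1)
  exact mul_le_mul (div_add_le_div_add ha hb ha' hb' hbb') (div_add_le_div_add ha hc ha' hc' hcc')
    (by positivity) (by positivity)

theorem contactAngle_lt_contactAngle (ha : 0 < a) (hb : 0 < b) (hc : 0 < c) (ha' : 0 < a')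
    (hb' : 0 < b') (hc' : 0 < c') (hbb' : b * a' < b' * a) (hcc' : c * a' ≤ c' * a) :
    contactAngle a b c < contactAngle a' b' c' := by
  have hlt : b / (a + b) * (c / (a + c)) < b' / (a' + b') * (c' / (a' + c')) :=
    mul_lt_mul (div_add_lt_div_add ha hb ha' hb' hbb') (div_add_le_div_add ha hc ha' hc' hcc')
      (by positivity) (by positivity)
  have hpos : 0 < b / (a + b) * (c / (a + c)) := by positivity
  have hone := div_add_mul_div_add_lt_one ha' hb' hc'
  rw [contactAngle_eq_arccos ha hb hc, contactAngle_eq_arccos ha' hb' hc']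
  apply Real.arccos_lt_arccos <;> linarith

end ContactAngle

section Numerics

theorem sum_range_two_mul_le_cos {x : ℝ} (hx : x ^ 2 ≤ 2) (k : ℕ) :
    ∑ i ∈ Finset.range (2 * k), (-1) ^ i * (x ^ (2 * i) / (2 * i).factorial) ≤ Real.cos x := by
  have hanti : Antitone fun i : ℕ => x ^ (2 * i) / ((2 * i).factorial : ℝ) := by
    refine antitone_nat_of_succ_le fun i => ?_
    have hfac : ((2 * (i + 1)).factorial : ℝ) = (2 * i + 2) * (2 * i + 1) * (2 * i).factorial := by
      rw [mul_add_one, Nat.factorial_succ, Nat.factorial_succ]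
      push_cast
      ring
    rw [div_le_div_iff₀ (by positivity) (by positivity), hfac, mul_add_one, pow_add,
      mul_assoc (x ^ (2 * i)), ← mul_assoc (x ^ (2 * i))]
    have hpow : 0 ≤ x ^ (2 * i) := by rw [pow_mul]; positivity
    rw [mul_assoc (x ^ (2 * i))]
    refine mul_le_mul_of_nonneg_left (mul_le_mul_of_nonneg_right ?_ (by positivity)) hpow
    nlinarith
  refine hanti.alternating_series_le_tendsto (HasSum.tendsto_sum_nat ?_) k
  simpa only [mul_div_assoc] using Real.hasSum_cos x

/-- A partial sum of the cosine series. -/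
noncomputable def cosLowerBound (x : ℝ) : ℝ :=
  1 - x ^ 2 / 2 + x ^ 4 / 24 - x ^ 6 / 720 + x ^ 8 / 40320 - x ^ 10 / 3628800

theorem cosLowerBound_le_cos {x : ℝ} (hx : x ^ 2 ≤ 2) : cosLowerBound x ≤ Real.cos x := by
  refine le_of_eq_of_le ?_ (sum_range_two_mul_le_cos hx 3)
  simp only [cosLowerBound, Finset.sum_range_succ, Finset.sum_range_zero, Nat.factorial]
  norm_num
  ring

-- The half-angle formula brings the argument of the cosine into the range of the series bound.
theorem lt_arccos_of_lt_cosLowerBound {x y t : ℝ} (hx : 0 ≤ x) (hxy : x ≤ 2 * y) (hy : y ^ 2 ≤ 2)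
    (ht : -1 ≤ t) (hpos : 0 ≤ cosLowerBound y) (h : t < 2 * cosLowerBound y ^ 2 - 1) :
    x < Real.arccos t := by
  have hypi : 2 * y ≤ Real.pi := by nlinarith [Real.pi_gt_three]
  have hcos : t < Real.cos (2 * y) := by
    rw [Real.cos_two_mul]
    linarith [pow_le_pow_left₀ hpos (cosLowerBound_le_cos hy) 2]
  calc x ≤ 2 * y := hxy
    _ = Real.arccos (Real.cos (2 * y)) := (Real.arccos_cos (by linarith) hypi).symm
    _ < Real.arccos t := Real.arccos_lt_arccos ht hcos (Real.cos_le_one _)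

theorem natCast_mul_pi_div_lt_contactAngle {a b c : ℝ} (p : ℕ)
    (hp : (p * 3.1416 / 12000 : ℝ) ^ 2 ≤ 2)
    (hcos : -1 ≤ 1 - 2 * b * c / ((a + b) * (a + c)))
    (hpos : 0 ≤ cosLowerBound (p * 3.1416 / 12000))
    (h : 1 - 2 * b * c / ((a + b) * (a + c)) < 2 * cosLowerBound (p * 3.1416 / 12000) ^ 2 - 1) :
    p * (Real.pi / 6000) < contactAngle a b c := by
  refine lt_arccos_of_lt_cosLowerBound (by positivity) ?_ hp hcos hpos h
  have hmul : p * Real.pi ≤ p * 3.1416 :=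
    mul_le_mul_of_nonneg_left Real.pi_lt_d4.le p.cast_nonneg
  linarith

end Numerics

/-- The three sizes of disks of a ternary packing. -/
inductive Size
  | small
  | medium
  | large
  deriving DecidableEq

open Size

instance : Fintype Size :=
  ⟨{small, medium, large}, fun k => by cases k <;> simp⟩

theorem Size.sum_univ {M : Type*} [AddCommMonoid M] (f : Size → M) :
    ∑ k, f k = f small + f medium + f large := by
  change ∑ k ∈ {small, medium, large}, f k = _
  simp [add_assoc]

/-- The combinatorial type of a corona: the numbers of pairs of consecutive neighbours of a disk,
sorted by the sizes of the two neighbours (`s`mall, `m`edium, `l`arge). -/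
structure CoronaVector where
  ss : ℕ
  sm : ℕ
  sl : ℕ
  mm : ℕ
  ml : ℕ
  ll : ℕ

namespace CoronaVector

/-- The sum of the weights `w i j` over the pairs of consecutive neighbours of sizes `i` and `j`. -/
def weight {M : Type*} [AddCommMonoid M] (N : CoronaVector) (w : Size → Size → M) : M :=
  N.ss • w small small + N.sm • w small medium + N.sl • w small large +
    N.mm • w medium medium + N.ml • w medium large + N.ll • w large large

/-- The number of pairs of consecutive neighbours of sizes `i ≤ j`; it is zero for `i > j`. -/
def count (N : CoronaVector) : Size → Size → ℕ
  | small, small => N.ss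
  | small, medium => N.sm
  | small, large => N.sl
  | medium, medium => N.mm
  | medium, large => N.ml
  | large, large => N.ll
  | _, _ => 0

/-- The number of neighbours. -/
def length (N : CoronaVector) : ℕ :=
  N.weight fun _ _ => 1

/-- The number of pairs of consecutive neighbours which both have size `k`. -/
def inner (N : CoronaVector) : Size → ℕ
  | small => N.ss
  | medium => N.mm
  | large => N.ll

/-- The number of pairs of consecutive neighbours of which exactly one has size `k`. -/
def boundary (N : CoronaVector) : Size → ℕ
  | small => N.sm + N.sl
  | medium => N.sm + N.ml
  | large => N.sl + N.ml

/-- The number of pairs of consecutive neighbours of which none has size `k`. -/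
def outer (N : CoronaVector) : Size → ℕ
  | small => N.mm + N.ml + N.ll
  | medium => N.ss + N.sl + N.ll
  | large => N.ss + N.sm + N.mm

/-- The presence of a neighbour of size `k`. -/
def Has (N : CoronaVector) (k : Size) : Prop :=
  0 < N.inner k + N.boundary k

/-- The parity and connectivity constraints on the counts of pairs in a cyclic sequence: the pairs
with exactly one member of size `k` separate the maximal runs of size `k` from the other ones. -/
def IsCyclic (N : CoronaVector) : Prop :=
  ∀ k, Even (N.boundary k) ∧ (N.boundary k = 0 → N.inner k = 0 ∨ N.outer k = 0)

instance (k : Size) : DecidablePred fun N : CoronaVector => N.Has k :=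
  fun N => inferInstanceAs (Decidable (0 < N.inner k + N.boundary k))

instance : DecidablePred IsCyclic :=
  fun N => inferInstanceAs (Decidable (∀ k, Even (N.boundary k) ∧ (_ → _)))

variable {N : CoronaVector} {k : Size}

theorem weight_eq_sum {M : Type*} [AddCommMonoid M] (N : CoronaVector) (w : Size → Size → M) :
    N.weight w = ∑ p : Size × Size, N.count p.1 p.2 • w p.1 p.2 := by
  simp [weight, count, Fintype.sum_prod_type, sum_univ, add_assoc]

theorem inner_eq_weight (N : CoronaVector) (k : Size) :
    N.inner k = N.weight fun i j => if i = k ∧ j = k then 1 else 0 := by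
  cases k <;> simp [inner, weight]

theorem boundary_eq_weight (N : CoronaVector) (k : Size) :
    N.boundary k = N.weight fun i j => if i = k ↔ j = k then 0 else 1 := by
  cases k <;> simp [boundary, weight]

theorem outer_eq_weight (N : CoronaVector) (k : Size) :
    N.outer k = N.weight fun i j => if i = k ∨ j = k then 0 else 1 := by
  cases k <;> simp [outer, weight]

theorem weight_const {M : Type*} [AddCommMonoid M] (N : CoronaVector) (x : M) :
    (N.weight fun _ _ => x) = N.length • x := by
  simp only [weight, length, smul_eq_mul, mul_one, add_smul]

theorem weight_natCast_mul {R : Type*} [Semiring R] (N : CoronaVector) (w : Size → Size → ℕ)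
    (x : R) : (N.weight fun i j => (w i j : R) * x) = (N.weight w : ℕ) * x := by
  simp only [weight, nsmul_eq_mul, smul_eq_mul, Nat.cast_add, Nat.cast_mul, add_mul, mul_assoc]

theorem exists_count_pos (h : N.Has k) : ∃ i j, (i = k ∨ j = k) ∧ 0 < N.count i j := by
  have hsum : 0 < ∑ j, (N.count k j + N.count j k) := by
    refine lt_of_lt_of_le h ?_
    cases k <;> simp [inner, boundary, count, sum_univ] <;> lia
  obtain ⟨j, -, hj⟩ := Finset.exists_ne_zero_of_sum_ne_zero hsum.ne'
  grind

theorem has_of_count_pos {i j : Size} (h : 0 < N.count i j) : N.Has i ∧ N.Has j := by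
  cases i <;> cases j <;> simp_all [Has, inner, boundary, count]

section Order

variable {M : Type*} [AddCommMonoid M] [PartialOrder M] {w w' : Size → Size → M}

theorem count_nsmul_le_count_nsmul [IsOrderedAddMonoid M]
    (h : ∀ i j, N.Has i → N.Has j → w i j ≤ w' i j) (i j : Size) :
    N.count i j • w i j ≤ N.count i j • w' i j := by
  rcases (N.count i j).eq_zero_or_pos with hzero | hpos
  · simp [hzero]
  · exact nsmul_le_nsmul_right (h i j (has_of_count_pos hpos).1 (has_of_count_pos hpos).2) _

theorem weight_le_weight [IsOrderedAddMonoid M] (h : ∀ i j, N.Has i → N.Has j → w i j ≤ w' i j) :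
    N.weight w ≤ N.weight w' := by
  rw [weight_eq_sum, weight_eq_sum]
  exact Finset.sum_le_sum fun p _ => count_nsmul_le_count_nsmul h p.1 p.2

theorem weight_lt_weight [IsOrderedCancelAddMonoid M]
    (h : ∀ i j, N.Has i → N.Has j → w i j ≤ w' i j) (hk : N.Has k)
    (hlt : ∀ i j, N.Has i → N.Has j → i = k ∨ j = k → w i j < w' i j) :
    N.weight w < N.weight w' := by
  obtain ⟨i, j, hij, hpos⟩ := exists_count_pos hk
  rw [weight_eq_sum, weight_eq_sum]
  refine Finset.sum_lt_sum (fun p _ => count_nsmul_le_count_nsmul h p.1 p.2)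
    ⟨(i, j), Finset.mem_univ _, nsmul_lt_nsmul_right hpos.ne' ?_⟩
  exact hlt i j (has_of_count_pos hpos).1 (has_of_count_pos hpos).2 hij

end Order

section OfSequence

/-- The number of indices `t < n` for which `c t` and `c (t + 1)` are `i` and `j`, in some order. -/
def pairCount (c : ℕ → Size) (n : ℕ) (i j : Size) : ℕ :=
  ∑ t ∈ Finset.range n, if s(c t, c (t + 1)) = s(i, j) then 1 else 0

/-- The corona vector of the sequence of sizes `c 0, c 1, …, c n`, where `c n = c 0` closes up the
corona. -/
def ofSequence (c : ℕ → Size) (n : ℕ) : CoronaVector where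
  ss := pairCount c n small small
  sm := pairCount c n small medium
  sl := pairCount c n small large
  mm := pairCount c n medium medium
  ml := pairCount c n medium large
  ll := pairCount c n large large

variable (c : ℕ → Size) (n : ℕ)

theorem weight_ofSequence {M : Type*} [AddCommMonoid M] {w : Size → Size → M}
    (hw : ∀ i j, w i j = w j i) :
    (ofSequence c n).weight w = ∑ t ∈ Finset.range n, w (c t) (c (t + 1)) := by
  simp only [weight, ofSequence, pairCount, Finset.sum_smul, ← Finset.sum_add_distrib]
  refine Finset.sum_congr rfl fun t _ => ?_
  cases c t <;> cases c (t + 1) <;> simp [hw]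

theorem exists_of_pairCount_pos {i j : Size} (h : 0 < pairCount c n i j) :
    ∃ t < n, c t = i ∧ c (t + 1) = j ∨ c t = j ∧ c (t + 1) = i := by
  obtain ⟨t, ht, hne⟩ := Finset.exists_ne_zero_of_sum_ne_zero h.ne'
  exact ⟨t, Finset.mem_range.1 ht, Sym2.eq_iff.1 (ite_ne_right_iff.1 hne).1⟩

theorem has_ofSequence : (ofSequence c n).Has k ↔ ∃ t < n, c t = k ∨ c (t + 1) = k := by
  rw [Has, inner_eq_weight, boundary_eq_weight, weight_ofSequence _ _ (by grind),
    weight_ofSequence _ _ (by grind), ← Finset.sum_add_distrib, Finset.sum_pos_iff]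
  grind

theorem even_sum_ite_iff (p : ℕ → Prop) [DecidablePred p] (n : ℕ) :
    Even (∑ t ∈ Finset.range n, if p t ↔ p (t + 1) then 0 else 1) ↔ (p 0 ↔ p n) := by
  induction n with
  | zero => simp
  | succ n ih =>
    rw [Finset.sum_range_succ, Nat.even_add, ih]
    by_cases h : p n ↔ p (n + 1)
    · simp [h]
    · simp only [h, if_false, Nat.not_even_one]
      tauto

theorem isCyclic_ofSequence (h : c n = c 0) : (ofSequence c n).IsCyclic := by
  intro k
  rw [inner_eq_weight, boundary_eq_weight, outer_eq_weight, weight_ofSequence _ _ (by grind),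
    weight_ofSequence _ _ (by grind), weight_ofSequence _ _ (by grind)]
  refine ⟨(even_sum_ite_iff (fun t => c t = k) n).2 (by rw [h]), fun hzero => ?_⟩
  have hstep : ∀ t < n, (c t = k ↔ c (t + 1) = k) := by simpa using hzero
  have hconst : ∀ t ≤ n, (c t = k ↔ c 0 = k) := by
    intro t ht
    induction t with
    | zero => rfl
    | succ t ih => rw [← hstep t ht, ih (by lia)]
  by_cases hk : c 0 = k
  · refine .inr (Finset.sum_eq_zero fun t ht => if_pos (.inl ?_))
    rwa [hconst t (Finset.mem_range.1 ht).le]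
  · refine .inl (Finset.sum_eq_zero fun t ht => if_neg fun htk => hk ?_)
    exact (hconst t (Finset.mem_range.1 ht).le).1 htk.1

end OfSequence

end CoronaVector

section TotalAngle

namespace CoronaVector

/-- The total angle around a disk of radius `a` of a corona of type `N`, for disks of radii
`ρ k`. -/
noncomputable def totalAngle (N : CoronaVector) (a : ℝ) (ρ : Size → ℝ) : ℝ :=
  N.weight fun i j => contactAngle a (ρ i) (ρ j)

variable {N : CoronaVector} {k : Size} {a a' : ℝ} {ρ ρ' : Size → ℝ}

theorem totalAngle_le_totalAngle (ha : 0 < a) (hρ : ∀ i, 0 < ρ i) (ha' : 0 < a')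
    (hρ' : ∀ i, 0 < ρ' i) (h : ∀ i, N.Has i → ρ i * a' ≤ ρ' i * a) :
    N.totalAngle a ρ ≤ N.totalAngle a' ρ' :=
  weight_le_weight fun i j hi hj => contactAngle_le_contactAngle ha (hρ i) (hρ j) ha' (hρ' i)
    (hρ' j) (h i hi) (h j hj)

theorem totalAngle_lt_totalAngle (ha : 0 < a) (hρ : ∀ i, 0 < ρ i) (ha' : 0 < a')
    (hρ' : ∀ i, 0 < ρ' i) (h : ∀ i, N.Has i → ρ i * a' ≤ ρ' i * a) (hk : N.Has k)
    (hlt : ρ k * a' < ρ' k * a) : N.totalAngle a ρ < N.totalAngle a' ρ' := by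
  refine weight_lt_weight (fun i j hi hj => contactAngle_le_contactAngle ha (hρ i) (hρ j) ha'
    (hρ' i) (hρ' j) (h i hi) (h j hj)) hk ?_
  rintro i j hi hj (rfl | rfl)
  · exact contactAngle_lt_contactAngle ha (hρ i) (hρ j) ha' (hρ' i) (hρ' j) hlt (h j hj)
  · rw [contactAngle_comm a, contactAngle_comm a']
    exact contactAngle_lt_contactAngle ha (hρ j) (hρ i) ha' (hρ' j) (hρ' i) hlt (h i hi)

theorem weight_mul_lt_of_mul_lt {w : Size → Size → ℕ} {B : ℕ} {x : ℝ} (hx : 0 < x)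
    (h : N.weight (fun i j => (w i j : ℝ) * x) < B * x) : N.weight w < B := by
  rw [weight_natCast_mul] at h
  exact_mod_cast lt_of_mul_lt_mul_right h hx.le

theorem exists_has_of_weight_ne_zero {M : Type*} [AddCommMonoid M] {w : Size → Size → M}
    (h : N.weight w ≠ 0) : ∃ k, N.Has k := by
  rw [weight_eq_sum] at h
  obtain ⟨p, -, hp⟩ := Finset.exists_ne_zero_of_sum_ne_zero h
  exact ⟨p.1, (has_of_count_pos (Nat.pos_of_ne_zero fun hzero => hp (by rw [hzero, zero_smul]))).1⟩

theorem two_lt_length (ha : 0 < a) (hρ : ∀ i, 0 < ρ i)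
    (hN : N.totalAngle a ρ = 2 * Real.pi) : 2 < N.length := by
  obtain ⟨k, hk⟩ := exists_has_of_weight_ne_zero (hN.trans_ne Real.two_pi_pos.ne')
  have hlt : N.totalAngle a ρ < N.weight fun _ _ => Real.pi :=
    weight_lt_weight (fun i j _ _ => (contactAngle_lt_pi ha (hρ i) (hρ j)).le) hk
      fun i j _ _ _ => contactAngle_lt_pi ha (hρ i) (hρ j)
  rw [hN, weight_const, nsmul_eq_mul] at hlt
  exact_mod_cast lt_of_mul_lt_mul_right hlt Real.pi_pos.le

theorem length_lt_six (ha : 0 < a) (hρ : ∀ i, 0 < ρ i)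
    (hN : N.totalAngle a ρ = 2 * Real.pi) (hle : ∀ i, N.Has i → a ≤ ρ i) (hk : N.Has k)
    (hlt : a < ρ k) : N.length < 6 := by
  have hequal : N.totalAngle 1 (fun _ => 1) < N.totalAngle a ρ :=
    totalAngle_lt_totalAngle one_pos (fun _ => one_pos) ha hρ (by simpa using hle) hk
      (by simpa using hlt)
  simp only [totalAngle, contactAngle_self one_pos] at hequal
  rw [weight_const, nsmul_eq_mul, ← totalAngle, hN] at hequal
  have : (N.length : ℝ) < 6 := by nlinarith [Real.pi_pos]
  exact_mod_cast this

/-- Upper bounds, in units of `π / 6`, for the contact angles at the center of a small disk. -/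
def smallUpperCost : Size → Size → ℕ
  | small, small => 2
  | small, _ => 3
  | _, small => 3
  | _, _ => 6

theorem contactAngle_lt_smallUpperCost (hρ : ∀ i, 0 < ρ i) {i j : Size}
    (h : i ≠ small ∨ j ≠ small) :
    contactAngle (ρ small) (ρ i) (ρ j) < smallUpperCost i j * (Real.pi / 6) := by
  have hright := contactAngle_self_left_lt_pi_div_two (hρ small) (hρ j)
  have hleft := contactAngle_comm (ρ small) _ _ ▸
    contactAngle_self_left_lt_pi_div_two (hρ small) (hρ i)
  have hpi := contactAngle_lt_pi (hρ small) (hρ i) (hρ j)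
  cases i <;> cases j <;>
    simp only [smallUpperCost, Nat.cast_ofNat, ne_eq, not_true, or_self] at h ⊢ <;>
    linarith

theorem twelve_lt_weight_smallUpperCost (hρ : ∀ i, 0 < ρ i)
    (hN : N.totalAngle (ρ small) ρ = 2 * Real.pi) (hk : N.Has k) (hks : k ≠ small) :
    12 < N.weight smallUpperCost := by
  have hlt : N.totalAngle (ρ small) ρ
      < N.weight fun i j => (smallUpperCost i j : ℝ) * (Real.pi / 6) := by
    refine weight_lt_weight (fun i j _ _ => ?_) hk fun i j _ _ hij =>
      contactAngle_lt_smallUpperCost hρ (by grind)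
    by_cases h : i ≠ small ∨ j ≠ small
    · exact (contactAngle_lt_smallUpperCost hρ h).le
    · push Not at h
      rw [h.1, h.2, contactAngle_self (hρ small), smallUpperCost]
      exact le_of_eq (by ring)
  rw [hN, weight_natCast_mul] at hlt
  have : (12 : ℝ) < N.weight smallUpperCost := by nlinarith [Real.pi_pos]
  exact_mod_cast this

end CoronaVector

/-- Numerical data for packings in which the ratio of the medium radius to the small one is less
than `ratio / 10`. The other fields are lower bounds, in units of `π / 6000`, for the contact angles
of `S`mall disks of radius `1` and `B`ig disks of radius `ratio / 10`, where the first letter stands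
for the disk at whose center the angle is measured. -/
structure RatioClass where
  ratio : ℕ
  angleSSB : ℕ
  angleSBB : ℕ
  angleBSS : ℕ
  angleBSB : ℕ
  deriving DecidableEq

/-- The classes used in the enumeration, by increasing ratio. The angles are rounded down, and the
ratios are a choice which keeps the number of candidates small. -/
def ratioClasses : List RatioClass :=
  [⟨19, 2327, 2728, 1344, 1635⟩, ⟨29, 2504, 3202, 990, 1398⟩, ⟨36, 2581, 3433, 837, 1283⟩,
    ⟨65, 2744, 4004, 510, 997⟩, ⟨100, 2826, 4358, 347, 820⟩]

namespace RatioClass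

/-- The radii which replace those of the disks of a packing: both the medium and the large disks
become big. -/
noncomputable def radii (w : RatioClass) : Size → ℝ
  | small => 1
  | _ => w.ratio / 10

/-- Lower bounds, in units of `π / 6000`, for the contact angles at the center of a small disk. -/
def smallCost (w : RatioClass) : Size → Size → ℕ
  | small, small => 2000
  | small, _ => w.angleSSB
  | _, small => w.angleSSB
  | _, _ => w.angleSBB

/-- Lower bounds, in units of `π / 6000`, for the contact angles at the center of a big disk. -/
def bigCost (w : RatioClass) : Size → Size → ℕ
  | small, small => w.angleBSS
  | small, _ => w.angleBSB
  | _, small => w.angleBSB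
  | _, _ => 2000

variable {w : RatioClass}

theorem ratio_pos (hw : w ∈ ratioClasses) : 0 < w.ratio := by
  revert w
  decide

theorem radii_pos (hw : w ∈ ratioClasses) (i : Size) : 0 < w.radii i := by
  have := ratio_pos hw
  cases i <;> simp only [radii] <;> positivity

theorem lt_contactAngle (hw : w ∈ ratioClasses) :
    w.angleSSB * (Real.pi / 6000) < contactAngle 1 1 (w.ratio / 10) ∧
      w.angleSBB * (Real.pi / 6000) < contactAngle 1 (w.ratio / 10) (w.ratio / 10) ∧
      w.angleBSS * (Real.pi / 6000) < contactAngle (w.ratio / 10) 1 1 ∧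
      w.angleBSB * (Real.pi / 6000) < contactAngle (w.ratio / 10) 1 (w.ratio / 10) := by
  revert w
  simp only [ratioClasses, List.forall_mem_cons]
  refine ⟨?_, ?_, ?_, ?_, ?_, by simp⟩ <;> refine ⟨?_, ?_, ?_, ?_⟩ <;>
    apply natCast_mul_pi_div_lt_contactAngle <;> norm_num [cosLowerBound]

theorem smallCost_mul_le_contactAngle (hw : w ∈ ratioClasses) (i j : Size) :
    w.smallCost i j * (Real.pi / 6000) ≤ contactAngle 1 (w.radii i) (w.radii j) := by
  obtain ⟨hSSB, hSBB, -, -⟩ := lt_contactAngle hw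
  have hcomm := contactAngle_comm 1 (w.ratio / 10) 1
  have hself := contactAngle_self one_pos
  cases i <;> cases j <;> simp only [smallCost, radii, Nat.cast_ofNat] <;> linarith

theorem bigCost_mul_le_contactAngle (hw : w ∈ ratioClasses) (i j : Size) :
    w.bigCost i j * (Real.pi / 6000) ≤ contactAngle (w.ratio / 10) (w.radii i) (w.radii j) := by
  obtain ⟨-, -, hBSS, hBSB⟩ := lt_contactAngle hw
  have hcomm := contactAngle_comm (w.ratio / 10) (w.ratio / 10) 1
  have hself := contactAngle_self (radii_pos hw large)
  cases i <;> cases j <;> simp only [bigCost, radii, Nat.cast_ofNat] at hself ⊢ <;> linarith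

end RatioClass

/-- The radii of the disks of the three sizes in a packing by disks of radii `1`, `p.1` and
`p.2`. -/
def radii (p : ℝ × ℝ) : Size → ℝ
  | small => p.2
  | medium => p.1
  | large => 1

/-- The pairs of radii considered in the theorem, the third radius being `1`. -/
structure IsRatioPair (p : ℝ × ℝ) : Prop where
  pos : 0 < p.2
  lt : p.2 < p.1
  lt_one : p.1 < 1

theorem IsRatioPair.radii_pos {p : ℝ × ℝ} (hp : IsRatioPair p) (i : Size) : 0 < radii p i := by
  cases i
  exacts [hp.pos, hp.pos.trans hp.lt, one_pos]

namespace CoronaVector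

variable {N : CoronaVector} {i k : Size} {p q : ℝ × ℝ} {w : RatioClass}

/-- A corona of type `N` exactly fills up the angle around a disk of size `k`. -/
def ClosesAround (N : CoronaVector) (p : ℝ × ℝ) (k : Size) : Prop :=
  N.totalAngle (radii p k) (radii p) = 2 * Real.pi

theorem ClosesAround.eq_of_le (hp : IsRatioPair p) (hq : IsRatioPair q) (hNp : N.ClosesAround p k)
    (hNq : N.ClosesAround q k)
    (h : ∀ i, N.Has i → radii p i * radii q k ≤ radii q i * radii p k) (hi : N.Has i) :
    radii p i * radii q k = radii q i * radii p k := by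
  refine (h i hi).eq_of_not_lt fun hlt => ?_
  have := totalAngle_lt_totalAngle (hp.radii_pos k) hp.radii_pos (hq.radii_pos k) hq.radii_pos h hi
    hlt
  rw [hNp, hNq] at this
  exact this.false

theorem ClosesAround.lt_ratio_mul (hp : IsRatioPair p) (hN : N.ClosesAround p small)
    (hw : w ∈ ratioClasses) (hcost : 12000 < N.weight w.smallCost) :
    p.1 * 10 < w.ratio * p.2 := by
  by_contra! hle
  have hbig : N.totalAngle 1 w.radii ≤ 2 * Real.pi := by
    rw [← hN]
    refine totalAngle_le_totalAngle one_pos (RatioClass.radii_pos hw) hp.pos hp.radii_pos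
      fun i _ => ?_
    cases i
    · simp [RatioClass.radii, radii]
    · simp only [RatioClass.radii, radii]
      linarith
    · simp only [RatioClass.radii, radii]
      linarith [hp.lt_one]
  have hle := (weight_le_weight fun i j _ _ =>
    RatioClass.smallCost_mul_le_contactAngle hw i j).trans hbig
  rw [weight_natCast_mul] at hle
  have hcost' : (12000 : ℝ) < N.weight w.smallCost := by exact_mod_cast hcost
  nlinarith [Real.pi_pos]

theorem ClosesAround.weight_bigCost_lt (hp : IsRatioPair p) (hN : N.ClosesAround p medium)
    (hw : w ∈ ratioClasses) (hratio : p.1 * 10 < w.ratio * p.2) (hk : N.Has k)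
    (hkm : k ≠ medium) : N.weight w.bigCost < 12000 := by
  have hpos : (0 : ℝ) < w.ratio := by exact_mod_cast RatioClass.ratio_pos hw
  have hlt : N.totalAngle (w.ratio / 10) w.radii < 2 * Real.pi := by
    rw [← hN]
    refine totalAngle_lt_totalAngle (by positivity) (RatioClass.radii_pos hw) (hp.radii_pos _)
      hp.radii_pos (fun i _ => ?_) hk ?_
    · cases i <;> simp only [RatioClass.radii, radii]
      · linarith
      · exact (mul_comm _ _).le
      · nlinarith [hp.lt_one]
    · cases k <;> simp only [RatioClass.radii, radii]
      · linarith
      · exact absurd rfl hkm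
      · nlinarith [hp.lt_one]
  refine weight_mul_lt_of_mul_lt (x := Real.pi / 6000) (by positivity) ?_
  refine ((weight_le_weight fun i j _ _ =>
    RatioClass.bigCost_mul_le_contactAngle hw i j).trans_lt hlt).trans_eq ?_
  push_cast
  ring

end CoronaVector

end TotalAngle

section KeyPairs

variable {A N : CoronaVector} {k : Size} {p q : ℝ × ℝ}

/-- Patterns of two coronas from which the radii of a packing can be recovered: `A` is the type of a
corona of a small disk and `N` that of a corona of a disk of size `k`. -/
inductive IsKeyPair : CoronaVector → Size → CoronaVector → Prop
  | mixed {A N : CoronaVector} (hAm : A.Has medium) (hAl : A.Has large) (hNs : N.Has small) :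
      IsKeyPair A medium N
  | small_small {A N : CoronaVector} (hAm : A.Has medium) (hAl : ¬A.Has large) (hNm : ¬N.Has medium)
      (hNl : N.Has large) : IsKeyPair A small N
  | medium_medium {A N : CoronaVector} (hAm : A.Has medium) (hAl : ¬A.Has large) (hNl : N.Has large)
      (hsl : N.sl = 0) : IsKeyPair A medium N
  | large_large {A N : CoronaVector} (hAm : ¬A.Has medium) (hAl : A.Has large) (hNs : ¬N.Has small)
      (hNl : N.Has large) : IsKeyPair A medium N

/-- The radii for which both coronas of a pair close up. -/
def commonRadii (A : CoronaVector) (k : Size) (N : CoronaVector) : Set (ℝ × ℝ) :=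
  {p | IsRatioPair p ∧ A.ClosesAround p small ∧ N.ClosesAround p k}

namespace CoronaVector

theorem ClosesAround.mul_eq_mul (hp : IsRatioPair p) (hq : IsRatioPair q)
    (hAp : A.ClosesAround p small) (hAq : A.ClosesAround q small) (hm : A.Has medium)
    (hl : ¬A.Has large) : p.1 * q.2 = q.1 * p.2 := by
  wlog hle : p.1 * q.2 ≤ q.1 * p.2 generalizing p q
  · exact (this hq hp hAq hAp (le_of_not_ge hle)).symm
  refine hAp.eq_of_le hp hq hAq (fun i hi => ?_) hm
  cases i
  exacts [(mul_comm _ _).le, hle, absurd hi hl]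

theorem ClosesAround.snd_eq_snd (hp : IsRatioPair p) (hq : IsRatioPair q)
    (hAp : A.ClosesAround p small) (hAq : A.ClosesAround q small) (hm : ¬A.Has medium)
    (hl : A.Has large) : p.2 = q.2 := by
  wlog hle : q.2 ≤ p.2 generalizing p q
  · exact (this hq hp hAq hAp (le_of_not_ge hle)).symm
  have := hAp.eq_of_le hp hq hAq (fun i hi => ?_) hl
  · simpa [radii] using this.symm
  cases i
  exacts [(mul_comm _ _).le, absurd hi hm, by simpa [radii] using hle]

theorem ClosesAround.fst_eq_fst (hp : IsRatioPair p) (hq : IsRatioPair q)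
    (hNp : N.ClosesAround p medium) (hNq : N.ClosesAround q medium) (hl : N.Has large)
    (hs : N.Has small → p.2 * q.1 = q.2 * p.1) : p.1 = q.1 := by
  wlog hle : q.1 ≤ p.1 generalizing p q
  · exact (this hq hp hNq hNp (fun h => (hs h).symm) (le_of_not_ge hle)).symm
  have := hNp.eq_of_le hp hq hNq (fun i hi => ?_) hl
  · simpa [radii] using this.symm
  cases i
  exacts [(hs hi).le, (mul_comm _ _).le, by simpa [radii] using hle]

end CoronaVector

theorem IsRatioPair.ext (hp : IsRatioPair p) (hmul : p.1 * q.2 = q.1 * p.2)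
    (h : p.2 = q.2) : p = q := by
  rw [h] at hmul
  exact Prod.ext (mul_right_cancel₀ (h ▸ hp.pos.ne') hmul) h

theorem subsingleton_commonRadii_of_mixed (hAm : A.Has medium) (hAl : A.Has large)
    (hNs : N.Has small) : (commonRadii A medium N).Subsingleton := by
  rintro p ⟨hp, hAp, hNp⟩ q ⟨hq, hAq, hNq⟩
  wlog hratio : p.1 * q.2 ≤ q.1 * p.2 generalizing p q
  · exact (this hq hAq hNq hp hAp hNp (le_of_not_ge hratio)).symm
  rcases le_or_gt q.2 p.2 with hle | hlt
  · have hsmall : ∀ i, A.Has i → radii p i * radii q small ≤ radii q i * radii p small := by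
      rintro (_ | _ | _) -
      exacts [(mul_comm _ _).le, hratio, by simpa [radii] using hle]
    have hlarge := hAp.eq_of_le hp hq hAq hsmall hAl
    simp only [radii, one_mul] at hlarge
    exact hp.ext (hAp.eq_of_le hp hq hAq hsmall hAm) hlarge.symm
  · have hfst : p.1 ≤ q.1 := by
      nlinarith [hp.pos, hq.pos, hq.lt]
    have hmedium : ∀ i, N.Has i → radii q i * radii p medium ≤ radii p i * radii q medium := by
      rintro (_ | _ | _) - <;> simp only [radii] <;> linarith
    have hmul := hNq.eq_of_le hq hp hNp hmedium hNs
    simp only [radii] at hmul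
    have hlarge := hAq.eq_of_le hq hp hAp (by
      rintro (_ | _ | _) - <;> simp only [radii] <;> linarith) hAl
    simp only [radii, one_mul] at hlarge
    exact absurd hlarge hlt.ne

theorem IsKeyPair.subsingleton_commonRadii (h : IsKeyPair A k N) :
    (commonRadii A k N).Subsingleton := by
  cases h with
  | mixed hAm hAl hNs => exact subsingleton_commonRadii_of_mixed hAm hAl hNs
  | small_small hAm hAl hNm hNl =>
    rintro p ⟨hp, hAp, hNp⟩ q ⟨hq, hAq, hNq⟩
    exact hp.ext (hAp.mul_eq_mul hp hq hAq hAm hAl) (hNp.snd_eq_snd hp hq hNq hNm hNl)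
  | medium_medium hAm hAl hNl =>
    rintro p ⟨hp, hAp, hNp⟩ q ⟨hq, hAq, hNq⟩
    have hmul := hAp.mul_eq_mul hp hq hAq hAm hAl
    have hfst := hNp.fst_eq_fst hp hq hNq hNl fun _ => by linarith
    rw [hfst] at hmul
    exact hp.ext (hfst ▸ hmul) (mul_left_cancel₀ (hq.pos.trans hq.lt).ne' hmul).symm
  | large_large hAm hAl hNs hNl =>
    rintro p ⟨hp, hAp, hNp⟩ q ⟨hq, hAq, hNq⟩
    exact Prod.ext (hNp.fst_eq_fst hp hq hNq hNl fun h => absurd h hNs)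
      (hAp.snd_eq_snd hp hq hAq hAm hAl)

end KeyPairs

section Enumeration

open CoronaVector

variable {A N : CoronaVector} {k : Size} {p : ℝ × ℝ}

/-- The corona vectors whose weight for the costs `cost` is at most `B`. -/
def vectorsWithin (cost : Size → Size → ℕ) (B : ℕ) : List CoronaVector :=
  (List.range (B / cost small small + 1)).flatMap fun ss =>
  let B := B - ss * cost small small
  (List.range (B / cost small medium + 1)).flatMap fun sm =>
  let B := B - sm * cost small medium
  (List.range (B / cost small large + 1)).flatMap fun sl =>
  let B := B - sl * cost small large
  (List.range (B / cost medium medium + 1)).flatMap fun mm =>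
  let B := B - mm * cost medium medium
  (List.range (B / cost medium large + 1)).flatMap fun ml =>
  let B := B - ml * cost medium large
  (List.range (B / cost large large + 1)).map fun ll => ⟨ss, sm, sl, mm, ml, ll⟩

theorem mem_vectorsWithin {cost : Size → Size → ℕ} {B : ℕ} (hcost : ∀ i j, 0 < cost i j)
    (h : N.weight cost ≤ B) : N ∈ vectorsWithin cost B := by
  simp only [weight, smul_eq_mul] at h
  simp only [vectorsWithin, List.mem_flatMap, List.mem_map, List.mem_range, Nat.lt_succ_iff,
    Nat.le_div_iff_mul_le (hcost _ _)]
  refine ⟨N.ss, ?_, N.sm, ?_, N.sl, ?_, N.mm, ?_, N.ml, ?_, N.ll, ?_, rfl⟩ <;> lia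

/-- The possible coronas of small disks which touch a larger one. -/
def smallCoronaVectors : List CoronaVector :=
  (vectorsWithin (fun _ _ => 1) 5).filter fun A => 12 < A.weight smallUpperCost ∧ A.IsCyclic

/-- The possible coronas of medium disks which touch a large disk but no small one. -/
def mediumLargeVectors : List CoronaVector :=
  (vectorsWithin (fun _ _ => 1) 5).filter fun N =>
    2 < N.length ∧ N.IsCyclic ∧ ¬N.Has small ∧ N.Has large

/-- The possible coronas of small disks which touch a medium disk and force the ratio of the medium
radius to the small one into the class `w`, but not into a smaller one. -/
def RatioClass.smallVectors (w : RatioClass) : List CoronaVector :=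
  smallCoronaVectors.filter fun A =>
    A.Has medium ∧ ratioClasses.find? (fun w => 12000 < A.weight w.smallCost) = some w

/-- The possible coronas of medium disks which touch a disk of another size, in the class `w`. -/
def RatioClass.mediumVectors (w : RatioClass) : List CoronaVector :=
  (vectorsWithin w.bigCost 11999).filter fun N => 2 < N.length ∧ N.IsCyclic

/-- The enumeration of the key pairs. -/
def candidates : List (CoronaVector × Size × CoronaVector) :=
  (ratioClasses.flatMap fun w =>
    ((w.smallVectors.filter fun A => A.Has large) ×ˢ
        (w.mediumVectors.filter fun N => N.Has small) ++
      (w.smallVectors.filter fun A => ¬A.Has large) ×ˢ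
        (w.mediumVectors.filter fun N => N.Has large ∧ N.sl = 0)).map
      fun x => (x.1, medium, x.2)) ++
  ((smallCoronaVectors.filter fun A => A.Has medium ∧ ¬A.Has large) ×ˢ
    (smallCoronaVectors.filter fun N => ¬N.Has medium ∧ N.Has large)).map
      (fun x => (x.1, small, x.2)) ++
  ((smallCoronaVectors.filter fun A => ¬A.Has medium ∧ A.Has large) ×ˢ mediumLargeVectors).map
      (fun x => (x.1, medium, x.2))

theorem length_candidates_le : candidates.length ≤ 13617 := by
  simp only [candidates, List.length_append, List.length_flatMap, List.length_product,
    List.length_map]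
  decide +kernel

theorem exists_mem_smallVectors (hA : A ∈ smallCoronaVectors) (hm : A.Has medium) :
    ∃ w ∈ ratioClasses, 12000 < A.weight w.smallCost ∧ A ∈ w.smallVectors := by
  have hsome : ∀ A ∈ smallCoronaVectors, A.Has medium →
      (ratioClasses.find? fun w => 12000 < A.weight w.smallCost).isSome := by decide +kernel
  obtain ⟨w, hw⟩ := Option.isSome_iff_exists.1 (hsome A hA hm)
  refine ⟨w, List.mem_of_find?_eq_some hw, by simpa using List.find?_some hw, ?_⟩
  simp [RatioClass.smallVectors, hA, hm, hw]

theorem mem_smallCoronaVectors (hp : IsRatioPair p) (hA : A.ClosesAround p small)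
    (hcyc : A.IsCyclic) (hk : A.Has k) (hks : k ≠ small) : A ∈ smallCoronaVectors := by
  have hle : ∀ i, radii p small ≤ radii p i := by
    rintro (_ | _ | _)
    exacts [le_rfl, hp.lt.le, (hp.lt.trans hp.lt_one).le]
  have hlt : radii p small < radii p k := by
    cases k
    exacts [absurd rfl hks, hp.lt, hp.lt.trans hp.lt_one]
  have hlength := length_lt_six hp.pos hp.radii_pos hA (fun i _ => hle i) hk hlt
  have hcost := twelve_lt_weight_smallUpperCost hp.radii_pos hA hk hks
  exact List.mem_filter.2 ⟨mem_vectorsWithin (fun _ _ => one_pos) (Nat.lt_succ_iff.1 hlength),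
    by simp [hcost, hcyc]⟩

theorem mem_mediumLargeVectors (hp : IsRatioPair p) (hN : N.ClosesAround p medium)
    (hcyc : N.IsCyclic) (hs : ¬N.Has small) (hl : N.Has large) : N ∈ mediumLargeVectors := by
  have hle : ∀ i, N.Has i → radii p medium ≤ radii p i := by
    rintro (_ | _ | _) hi
    exacts [absurd hi hs, le_rfl, hp.lt_one.le]
  have hlength := length_lt_six (hp.radii_pos _) hp.radii_pos hN hle hl hp.lt_one
  have htwo := two_lt_length (hp.radii_pos _) hp.radii_pos hN
  exact List.mem_filter.2 ⟨mem_vectorsWithin (fun _ _ => one_pos) (Nat.lt_succ_iff.1 hlength),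
    by simp [htwo, hcyc, hs, hl]⟩

theorem RatioClass.bigCost_pos {w : RatioClass} (hw : w ∈ ratioClasses) (i j : Size) :
    0 < w.bigCost i j := by
  revert w
  decide +revert

theorem RatioClass.mem_mediumVectors {w : RatioClass} (hw : w ∈ ratioClasses)
    (hA : A.ClosesAround p small) (hcost : 12000 < A.weight w.smallCost) (hp : IsRatioPair p)
    (hN : N.ClosesAround p medium) (hcyc : N.IsCyclic) (hk : N.Has k) (hkm : k ≠ medium) :
    N ∈ w.mediumVectors := by
  have hlt := hN.weight_bigCost_lt hp hw (hA.lt_ratio_mul hp hw hcost) hk hkm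
  have htwo := two_lt_length (hp.radii_pos _) hp.radii_pos hN
  exact List.mem_filter.2 ⟨mem_vectorsWithin (bigCost_pos hw) (by lia), by simp [htwo, hcyc]⟩

theorem IsKeyPair.mem_candidates (h : IsKeyPair A k N) (hA : A.IsCyclic) (hN : N.IsCyclic)
    (hp : p ∈ commonRadii A k N) : (A, k, N) ∈ candidates := by
  obtain ⟨hp, hAp, hNp⟩ := hp
  simp only [candidates, List.mem_append, List.mem_map, List.mem_flatMap]
  cases h with
  | mixed hAm hAl hNs =>
    obtain ⟨w, hw, hcost, hAw⟩ := exists_mem_smallVectors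
      (mem_smallCoronaVectors hp hAp hA hAm (by decide)) hAm
    have hNw := RatioClass.mem_mediumVectors hw hAp hcost hp hNp hN hNs (by decide)
    exact .inl (.inl ⟨w, hw, (A, N), .inl (by simp [*]), rfl⟩)
  | small_small hAm hAl hNm hNl =>
    have hA' := mem_smallCoronaVectors hp hAp hA hAm (by decide)
    have hN' := mem_smallCoronaVectors hp hNp hN hNl (by decide)
    exact .inl (.inr ⟨(A, N), by simp [*], rfl⟩)
  | medium_medium hAm hAl hNl hsl =>
    obtain ⟨w, hw, hcost, hAw⟩ := exists_mem_smallVectors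
      (mem_smallCoronaVectors hp hAp hA hAm (by decide)) hAm
    have hNw := RatioClass.mem_mediumVectors hw hAp hcost hp hNp hN hNl (by decide)
    exact .inl (.inl ⟨w, hw, (A, N), .inr (by simp [*]), rfl⟩)
  | large_large hAm hAl hNs hNl =>
    have hA' := mem_smallCoronaVectors hp hAp hA hAl (by decide)
    have hN' := mem_mediumLargeVectors hp hNp hN hNs hNl
    exact .inr ⟨(A, N), by simp [*], rfl⟩

end Enumeration

section TernaryPackings

open CoronaVector

/-- The compact packings considered in the theorem, for a given pair of radii. -/
structure IsTernaryPacking (P : Set Disk) (p : ℝ × ℝ) : Prop where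
  isRatioPair : IsRatioPair p
  isCompactPacking : IsCompactPacking P
  radiiIn : RadiiIn P {1, p.1, p.2}
  usesRadius (k : Size) : UsesRadius P (radii p k)

/-- Some disk of size `i` touches a disk of size `j`. -/
def InContact (P : Set Disk) (p : ℝ × ℝ) (i j : Size) : Prop :=
  ∃ d ∈ P, ∃ e ∈ P, d.radius = radii p i ∧ e.radius = radii p j ∧ d.Tangent e

/-- `N` is the type of a corona of the disk `d` of size `k`. -/
structure IsCoronaVector (P : Set Disk) (p : ℝ × ℝ) (d : Disk) (k : Size) (N : CoronaVector) :
    Prop where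
  closesAround : N.ClosesAround p k
  isCyclic : N.IsCyclic
  has_iff (j : Size) : N.Has j ↔ ∃ e ∈ P, e.radius = radii p j ∧ d.Tangent e
  inContact : N.sl ≠ 0 → InContact P p small large

variable {P : Set Disk} {p : ℝ × ℝ} {d e : Disk} {i j k : Size} {N : CoronaVector}

theorem IsRatioPair.radii_injective (hp : IsRatioPair p) : Function.Injective (radii p) := by
  have hsm := hp.lt
  have hml := hp.lt_one
  intro i j hij
  cases i <;> cases j <;> simp only [radii] at hij <;> first | rfl | linarith

theorem InContact.symm (h : InContact P p i j) : InContact P p j i := by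
  obtain ⟨d, hd, e, he, hdi, hej, htan⟩ := h
  exact ⟨e, he, d, hd, hej, hdi, htan.symm⟩

theorem IsCoronaVector.inContact_of_has (hN : IsCoronaVector P p d k N) (hd : d ∈ P)
    (hk : d.radius = radii p k) (hj : N.Has j) : InContact P p k j := by
  obtain ⟨e, he, hej, htan⟩ := (hN.has_iff j).1 hj
  exact ⟨d, hd, e, he, hk, hej, htan⟩

theorem IsCorona.isCoronaVector {n : ℕ} {f : ℕ → Disk} (hf : IsCorona P d n f) {c : ℕ → Size}
    (hc : ∀ t, (f t).radius = radii p (c t)) (hp : IsRatioPair p) (hk : d.radius = radii p k) :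
    IsCoronaVector P p d k (ofSequence c n) where
  closesAround := by
    rw [ClosesAround, totalAngle, weight_ofSequence _ _ fun i j => contactAngle_comm _ _ _,
      ← hf.sum_angle]
    simp only [hk, hc]
  isCyclic := isCyclic_ofSequence c n (hp.radii_injective (by rw [← hc, ← hc, hf.closed]))
  has_iff j := by
    rw [has_ofSequence]
    constructor
    · rintro ⟨t, -, rfl | rfl⟩
      · exact ⟨f t, hf.mem t, hc t, hf.tangent t⟩
      · exact ⟨f (t + 1), hf.mem _, hc _, hf.tangent _⟩
    · rintro ⟨e, he, hej, htan⟩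
      obtain ⟨t, ht, rfl⟩ := hf.exists_eq e he htan
      exact ⟨t, ht, .inl (hp.radii_injective ((hc t).symm.trans hej))⟩
  inContact hsl := by
    obtain ⟨t, ht, ⟨hs, hl⟩ | ⟨hl, hs⟩⟩ :=
      exists_of_pairCount_pos c n (Nat.pos_of_ne_zero hsl)
    · exact ⟨f t, hf.mem t, f (t + 1), hf.mem _, hs ▸ hc t, hl ▸ hc _, hf.consecutive t ht⟩
    · exact ⟨f (t + 1), hf.mem _, f t, hf.mem t, hs ▸ hc _, hl ▸ hc t,
        (hf.consecutive t ht).symm⟩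

namespace IsTernaryPacking

theorem exists_radius_eq (hP : IsTernaryPacking P p) (hd : d ∈ P) : ∃ k, d.radius = radii p k := by
  rcases hP.radiiIn d hd with h | h | h
  exacts [⟨large, h⟩, ⟨medium, h⟩, ⟨small, h⟩]

theorem locallyFinite (hP : IsTernaryPacking P p) : LocallyFinite fun d : P => d.1.set := by
  have hp := hP.isRatioPair
  refine hP.isCompactPacking.1.locallyFinite hp.pos (M := 1) fun d hd => ?_
  obtain ⟨k, hk⟩ := hP.exists_radius_eq hd
  rw [hk]
  cases k
  exacts [⟨le_rfl, (hp.lt.trans hp.lt_one).le⟩, ⟨hp.lt.le, hp.lt_one.le⟩,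
    ⟨(hp.lt.trans hp.lt_one).le, le_rfl⟩]

theorem exists_inContact_ne (hP : IsTernaryPacking P p) (hij : i ≠ j) :
    ∃ l ≠ i, InContact P p i l := by
  obtain ⟨d, hd, hdi⟩ := hP.usesRadius i
  obtain ⟨e, he, hej⟩ := hP.usesRadius j
  obtain ⟨d', hd', e', he', hdi', hei', htan⟩ :=
    hP.isCompactPacking.exists_tangent_of_mem_of_notMem hP.locallyFinite
      (A := {d | d.radius = radii p i}) hd hdi he
      fun h => hij (hP.isRatioPair.radii_injective (h.symm.trans hej))
  obtain ⟨l, hl⟩ := hP.exists_radius_eq he'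
  exact ⟨l, fun h => hei' (h ▸ hl), d', hd', e', he', hdi', hl, htan⟩

theorem exists_isCoronaVector (hP : IsTernaryPacking P p) (hd : d ∈ P) (hk : d.radius = radii p k) :
    ∃ N, IsCoronaVector P p d k N := by
  obtain ⟨n, f, hf⟩ := hP.isCompactPacking.exists_corona hP.locallyFinite hd
  choose c hc using fun t => hP.exists_radius_eq (hf.mem t)
  exact ⟨_, hf.isCoronaVector hc hP.isRatioPair hk⟩

theorem exists_isCoronaVector_has (hP : IsTernaryPacking P p) (h : InContact P p k j) :
    ∃ d ∈ P, d.radius = radii p k ∧ ∃ N, IsCoronaVector P p d k N ∧ N.Has j := by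
  obtain ⟨d, hd, e, he, hdk, hej, htan⟩ := h
  obtain ⟨N, hN⟩ := hP.exists_isCoronaVector hd hdk
  exact ⟨d, hd, hdk, N, hN, (hN.has_iff j).2 ⟨e, he, hej, htan⟩⟩

theorem exists_isKeyPair_of_mixed (hP : IsTernaryPacking P p) {A : CoronaVector}
    (hd : d ∈ P) (hds : d.radius = radii p small) (hA : IsCoronaVector P p d small A)
    (hAm : A.Has medium) (hAl : A.Has large) :
    ∃ e k N, IsCoronaVector P p e k N ∧ IsKeyPair A k N := by
  obtain ⟨e, he, hem, htan⟩ := (hA.has_iff medium).1 hAm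
  obtain ⟨N, hN⟩ := hP.exists_isCoronaVector he hem
  exact ⟨e, medium, N, hN, .mixed hAm hAl ((hN.has_iff small).2 ⟨d, hd, hds, htan.symm⟩)⟩

theorem exists_isKeyPair (hP : IsTernaryPacking P p) :
    ∃ d A e k N, IsCoronaVector P p d small A ∧ IsCoronaVector P p e k N ∧ IsKeyPair A k N := by
  by_cases hmixed : ∃ d ∈ P, d.radius = radii p small ∧
      ∃ A, IsCoronaVector P p d small A ∧ A.Has medium ∧ A.Has large
  · obtain ⟨d, hd, hds, A, hA, hAm, hAl⟩ := hmixed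
    obtain ⟨e, k, N, hN, hkey⟩ := hP.exists_isKeyPair_of_mixed hd hds hA hAm hAl
    exact ⟨d, A, e, k, N, hA, hN, hkey⟩
  by_cases hsm : InContact P p small medium
  · obtain ⟨d, hd, hds, A, hA, hAm⟩ := hP.exists_isCoronaVector_has hsm
    have hAl : ¬A.Has large := fun hAl => hmixed ⟨d, hd, hds, A, hA, hAm, hAl⟩
    by_cases hsl : InContact P p small large
    · obtain ⟨e, he, hes, N, hN, hNl⟩ := hP.exists_isCoronaVector_has hsl
      have hNm : ¬N.Has medium := fun hNm => hmixed ⟨e, he, hes, N, hN, hNm, hNl⟩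
      exact ⟨d, A, e, small, N, hA, hN, .small_small hAm hAl hNm hNl⟩
    · have hml : InContact P p medium large := by
        obtain ⟨i, hi, hli⟩ := hP.exists_inContact_ne (i := large) (j := small) (by decide)
        cases i
        exacts [absurd hli.symm hsl, hli.symm, absurd rfl hi]
      obtain ⟨e, -, -, N, hN, hNl⟩ := hP.exists_isCoronaVector_has hml
      exact ⟨d, A, e, medium, N, hA, hN, .medium_medium hAm hAl hNl (by_contra fun h =>
        hsl (hN.inContact h))⟩
  · have hsl : InContact P p small large := by
      obtain ⟨i, hi, hsi⟩ := hP.exists_inContact_ne (i := small) (j := large) (by decide)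
      cases i
      exacts [absurd rfl hi, absurd hsi hsm, hsi]
    have hml : InContact P p medium large := by
      obtain ⟨i, hi, hmi⟩ := hP.exists_inContact_ne (i := medium) (j := large) (by decide)
      cases i
      exacts [absurd hmi.symm hsm, absurd rfl hi, hmi]
    obtain ⟨d, hd, hds, A, hA, hAl⟩ := hP.exists_isCoronaVector_has hsl
    obtain ⟨e, he, hem, N, hN, hNl⟩ := hP.exists_isCoronaVector_has hml
    have hAm : ¬A.Has medium := fun h => hsm (hA.inContact_of_has hd hds h)
    have hNs : ¬N.Has small := fun h => hsm (hN.inContact_of_has he hem h).symm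
    exact ⟨d, A, e, medium, N, hA, hN, .large_large hAm hAl hNs hNl⟩

theorem exists_mem_candidates (hP : IsTernaryPacking P p) :
    ∃ x ∈ candidates, IsKeyPair x.1 x.2.1 x.2.2 ∧ p ∈ commonRadii x.1 x.2.1 x.2.2 := by
  obtain ⟨d, A, e, k, N, hA, hN, hkey⟩ := hP.exists_isKeyPair
  have hp : p ∈ commonRadii A k N := ⟨hP.isRatioPair, hA.closesAround, hN.closesAround⟩
  exact ⟨(A, k, N), hkey.mem_candidates hA.isCyclic hN.isCyclic hp, hkey, hp⟩

end IsTernaryPacking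

theorem encard_setOf_exists_mem_le_length {α β : Type*} (K : List α) {S : α → Set β}
    (hS : ∀ x, (S x).Subsingleton) : {y | ∃ x ∈ K, y ∈ S x}.encard ≤ K.length := by
  induction K with
  | nil => simp
  | cons x K ih =>
    have hunion : {y | ∃ z ∈ x :: K, y ∈ S z} = S x ∪ {y | ∃ z ∈ K, y ∈ S z} := by
      ext y
      simp
    rw [hunion, List.length_cons, Nat.cast_add, Nat.cast_one, add_comm]
    exact (encard_union_le _ _).trans (add_le_add (encard_le_one_iff_subsingleton.2 (hS x)) ih)

end TernaryPackings

theorem encard_setOf_isTernaryPacking_le :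
    {p : ℝ × ℝ | ∃ P, IsTernaryPacking P p}.encard ≤ (13617 : ℕ) := by
  have hsub : {p : ℝ × ℝ | ∃ P, IsTernaryPacking P p} ⊆ {p | ∃ x ∈ candidates,
      p ∈ {p | IsKeyPair x.1 x.2.1 x.2.2 ∧ p ∈ commonRadii x.1 x.2.1 x.2.2}} :=
    fun p ⟨P, hP⟩ => hP.exists_mem_candidates
  have hcard := encard_setOf_exists_mem_le_length candidates (S := fun x =>
    {p | IsKeyPair x.1 x.2.1 x.2.2 ∧ p ∈ commonRadii x.1 x.2.1 x.2.2})
    fun x p ⟨h, hp⟩ q ⟨_, hq⟩ => h.subsingleton_commonRadii hp hq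
  exact (encard_le_encard hsub).trans (hcard.trans (by exact_mod_cast length_candidates_le))

/-- there are at most 13617 pairs `(r, s)` with `0 < s < r < 1`
allowing a compact packing by disks of radii `1`, `r` and `s` using all three radii. -/
theorem ternary_compact_ratios_bound :
    {p : ℝ × ℝ | 0 < p.2 ∧ p.2 < p.1 ∧ p.1 < 1 ∧
      ∃ P : Set Disk, IsCompactPacking P ∧ RadiiIn P {1, p.1, p.2} ∧
        UsesRadius P 1 ∧ UsesRadius P p.1 ∧ UsesRadius P p.2}.Finite ∧
    {p : ℝ × ℝ | 0 < p.2 ∧ p.2 < p.1 ∧ p.1 < 1 ∧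
      ∃ P : Set Disk, IsCompactPacking P ∧ RadiiIn P {1, p.1, p.2} ∧
        UsesRadius P 1 ∧ UsesRadius P p.1 ∧ UsesRadius P p.2}.ncard ≤ 13617 := by
  rw [← Set.encard_le_coe_iff_finite_ncard_le]
  refine (Set.encard_le_encard ?_).trans encard_setOf_isTernaryPacking_le
  rintro p ⟨hpos, hlt, hone, P, hcompact, hradii, hlarge, hmedium, hsmall⟩
  exact ⟨P, ⟨hpos, hlt, hone⟩, hcompact, hradii, by
    rintro (_ | _ | _)
    exacts [hsmall, hmedium, hlarge]⟩
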